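/- arXiv:2405.14914 — 3 statements merged into one kernel-verified Lean document; each statement's English description precedes it below -/
import Mathlib

section
/- Let g ≥ 1 and α ≥ 1 be integers and let 𝔽_q be a finite field. The number of GL₂(R)-simultaneous-conjugacy classes of absolutely indecomposable tuples x ∈ M₂(R)^g equals the rational number q^{2αg−1}·(q^{2g}−1)·(q^{α(2g−3)}−1) / ((q²−1)·(q^{2g−3}−1)). -/
/-- The ring of truncated polynomials `F[t]/(t^α)`. -/
abbrev TruncRing (F : Type) [CommRing F] (α : ℕ) : Type :=
  Polynomial F ⧸ Ideal.span {(Polynomial.X : Polynomial F) ^ α}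

/-- The image of `t` in `F[t]/(t^α)`. -/
noncomputable def tvar (F : Type) [CommRing F] (α : ℕ) : TruncRing F α :=
  Ideal.Quotient.mk _ (Polynomial.X : Polynomial F)
/-- The ring homomorphism `F[t]/(t^α) → K[t]/(t^α)` induced by a ring homomorphism
`φ : F → K`. -/
noncomputable def truncMap {F K : Type} [CommRing F] [CommRing K] (φ : F →+* K)
    (α : ℕ) : TruncRing F α →+* TruncRing K α :=
  Ideal.Quotient.lift _
    ((Ideal.Quotient.mk (Ideal.span {(Polynomial.X : Polynomial K) ^ α})).comp
      (Polynomial.mapRingHom φ))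
    (by
      intro a ha
      rw [Ideal.mem_span_singleton] at ha
      obtain ⟨c, rfl⟩ := ha
      have h1 : (Polynomial.mapRingHom φ) ((Polynomial.X : Polynomial F) ^ α * c)
          = (Polynomial.X : Polynomial K) ^ α * Polynomial.map φ c := by
        simp [Polynomial.coe_mapRingHom]
      rw [RingHom.comp_apply, h1, Ideal.Quotient.eq_zero_iff_mem]
      exact Ideal.mul_mem_right _ _ (Ideal.subset_span rfl))

/-- The `g`-tuple `x` of `2×2` matrices over `R` is simultaneously diagonalizable: some
`P ∈ GL₂(R)` makes all `P x_i P⁻¹` diagonal. -/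
def SimDiagonalizable {R : Type} [CommRing R] {g : ℕ}
    (x : Fin g → Matrix (Fin 2) (Fin 2) R) : Prop :=
  ∃ P : (Matrix (Fin 2) (Fin 2) R)ˣ, ∀ i : Fin g,
    ((P : Matrix (Fin 2) (Fin 2) R) * x i *
      ((P⁻¹ : (Matrix (Fin 2) (Fin 2) R)ˣ) : Matrix (Fin 2) (Fin 2) R)).IsDiag

/-- `x ∈ M₂(R)^g` is absolutely indecomposable: for every finite field extension `K` of
`F`, the tuple obtained by applying `F[t]/(t^α) → K[t]/(t^α)` entrywise is not
simultaneously diagonalizable. -/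
def AbsIndecTwo (F : Type) [Field F] (α g : ℕ)
    (x : Fin g → Matrix (Fin 2) (Fin 2) (TruncRing F α)) : Prop :=
  ∀ (K : Type) [Field K] [Algebra F K] [FiniteDimensional F K],
    ¬ SimDiagonalizable (fun i => (x i).map (truncMap (algebraMap F K) α))

/-!
By Burnside's lemma, the classes of all tuples are counted by the centralizers in `M₂(R)` of the
`P ∈ GL₂(R)`, and the order of a centralizer depends only on the largest `k` such that `P` is scalar
modulo `t^k`. The difference with the asserted number is `q^{2αg}`, so this is how many classes of
tuples become diagonalizable over an extension of `F = 𝔽_q`.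

Such a tuple commutes with a matrix `C` over `R` of unit discriminant. Replacing `C` by `C ^ q^α`,
a power of the Frobenius that kills `t`, makes its trace and determinant constant, so after a
conjugation `C` is defined over `F`. The coefficients of the `t^k` are then an `αg`-tuple over `F`
commuting with a separable matrix. Over an algebraic closure both kinds of tuples are diagonal,
which shows that this passage to `F` respects conjugacy. Finally, sorting the tuples of length `n`
over `F` by their first non-scalar entry, normalized to a companion matrix, there are `q^{2n}`
classes.
-/

open Polynomial Matrix

theorem card_isUnit (M : Type*) [Monoid M] : Nat.card {m : M // IsUnit m} = Nat.card Mˣ :=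
  Nat.card_range_of_injective Units.val_injective

theorem card_subtype_forall_apply {ι X : Type*} [Finite ι] (p : X → Prop) :
    Nat.card {f : ι → X // ∀ i, p (f i)} = Nat.card {x // p x} ^ Nat.card ι := by
  rw [Nat.card_congr (Equiv.subtypePiEquivPi (p := fun _ => p)), Nat.card_fun]

theorem card_preimage_eq_card_mul_card_ker {G H : Type*} [AddGroup G] [AddGroup H] {f : G →+ H}
    (hf : Function.Surjective f) (S : Set H) :
    Nat.card (f ⁻¹' S) = Nat.card S * Nat.card f.ker := by
  have fibers : f ⁻¹' S ≃ S × f.ker :=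
    ((Equiv.sigmaSubtypeFiberEquivSubtype f fun _ => Iff.rfl).symm.trans <|
      Equiv.sigmaCongrRight fun s => f.fiberEquivKerOfSurjective hf s.1).trans <|
      Equiv.sigmaEquivProd S f.ker
  rw [Nat.card_congr fibers, Nat.card_prod]

theorem sum_comp_eq_sum_card_lt {ι M : Type*} [Ring M] (s : Finset ι) {ℓ : ι → ℕ} {n : ℕ}
    (hℓ : ∀ x ∈ s, ℓ x ≤ n) (f : ℕ → M) :
    ∑ x ∈ s, f (ℓ x) = s.card * f 0 +
      ∑ j ∈ Finset.range n, (s.filter fun x => j < ℓ x).card * (f (j + 1) - f j) := by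
  have telescope : ∀ x ∈ s, f (ℓ x) =
      f 0 + ∑ j ∈ Finset.range n, if j < ℓ x then f (j + 1) - f j else 0 := fun x hx => by
    have below : (Finset.range n).filter (· < ℓ x) = Finset.range (ℓ x) := by
      ext j
      simpa using fun hj => hj.trans_le (hℓ x hx)
    rw [← Finset.sum_filter, below, Finset.sum_range_sub, add_sub_cancel]
  rw [Finset.sum_congr rfl telescope, Finset.sum_add_distrib, Finset.sum_comm]
  simp only [← Finset.sum_filter, Finset.sum_const, nsmul_eq_mul]

theorem card_quot_subtype_add_card {X N : Type*} [Finite X] {r : X → X → Prop}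
    (hr : Equivalence r) {p : X → Prop} (hp : ∀ {x y}, r x y → p x → p y) {f : N → X}
    (not_p : ∀ n, ¬p (f n)) (inj : ∀ {m n}, r (f m) (f n) → m = n)
    (surj : ∀ {x}, ¬p x → ∃ n, r x (f n)) :
    Nat.card (Quot fun x y : {x // p x} => r x y) + Nat.card N = Nat.card (Quot r) := by
  have : Finite N := Finite.of_injective f fun m n h => inj (h ▸ hr.refl _)
  let F : (Quot fun x y : {x // p x} => r x y) ⊕ N → Quot r :=
    Sum.elim (Quot.map Subtype.val fun _ _ => id) (Quot.mk r ∘ f)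
  have related {x y : X} : Quot.mk r x = Quot.mk r y → r x y := (hr.quot_mk_eq_iff x y).1
  have F_injective : Function.Injective F := by
    rintro (⟨⟨x⟩⟩ | m) (⟨⟨y⟩⟩ | n) h
    · exact congrArg Sum.inl (Quot.sound (related h))
    · exact absurd (hp (related h) x.2) (not_p n)
    · exact absurd (hp (hr.symm (related h)) y.2) (not_p m)
    · exact congrArg Sum.inr (inj (related h))
  have F_surjective : Function.Surjective F := by
    rintro ⟨x⟩
    by_cases hx : p x
    · exact ⟨.inl (Quot.mk _ ⟨x, hx⟩), rfl⟩
    · obtain ⟨n, hn⟩ := surj hx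
      exact ⟨.inr n, Quot.sound (hr.symm hn)⟩
  rw [← Nat.card_sum, Nat.card_eq_of_bijective F ⟨F_injective, F_surjective⟩]

/-! ### Simultaneous conjugacy -/

/-- Simultaneous conjugacy of two families of elements of a monoid: one unit conjugates `x i` to
`y i` for all `i`. -/
def SimConj {A ι : Type*} [Monoid A] (x y : ι → A) : Prop :=
  ∃ P : Aˣ, ∀ i, y i = P * x i * (P⁻¹ : Aˣ)

namespace SimConj

section Monoid

variable {A B ι κ : Type*} [Monoid A] [Monoid B] {x y z : ι → A}

theorem iff_mem_orbit : SimConj x y ↔ y ∈ MulAction.orbit (ConjAct Aˣ) x := by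
  refine Iff.trans (exists_congr fun P => ?_) ConjAct.toConjAct.surjective.exists.symm
  simp only [funext_iff, Pi.smul_apply, ConjAct.units_smul_def, ConjAct.ofConjAct_toConjAct,
    eq_comm]

theorem refl (x : ι → A) : SimConj x x :=
  iff_mem_orbit.2 (MulAction.mem_orbit_self x)

theorem symm (h : SimConj x y) : SimConj y x :=
  iff_mem_orbit.2 (MulAction.mem_orbit_symm.1 (iff_mem_orbit.1 h))

theorem trans (hxy : SimConj x y) (hyz : SimConj y z) : SimConj x z := by
  rw [iff_mem_orbit] at *
  exact MulAction.orbit_eq_iff.2 hxy ▸ hyz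

variable (A ι) in
theorem equivalence : Equivalence (SimConj : (ι → A) → (ι → A) → Prop) :=
  ⟨refl, symm, trans⟩

theorem map (h : SimConj x y) (φ : A →* B) : SimConj (φ ∘ x) (φ ∘ y) := by
  obtain ⟨P, hP⟩ := h
  exact ⟨Units.map φ P, fun i => by simp [hP]⟩

theorem comp (h : SimConj x y) (f : κ → ι) : SimConj (x ∘ f) (y ∘ f) := by
  obtain ⟨P, hP⟩ := h
  exact ⟨P, fun i => hP (f i)⟩

theorem card_quot_mul_card_units [Finite A] [Fintype ι] [Fintype Aˣ] :
    Nat.card (Quot (SimConj : (ι → A) → (ι → A) → Prop)) * Nat.card Aˣ =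
      ∑ P : Aˣ, Nat.card {z : A // Commute (P : A) z} ^ Fintype.card ι := by
  classical
  have : Fintype (ConjAct Aˣ) := inferInstanceAs (Fintype Aˣ)
  have (P : ConjAct Aˣ) : Fintype (MulAction.fixedBy (ι → A) P) := Fintype.ofFinite _
  have : Fintype (MulAction.orbitRel.Quotient (ConjAct Aˣ) (ι → A)) := Fintype.ofFinite _
  have burnside := MulAction.sum_card_fixedBy_eq_card_orbits_mul_card_group (ConjAct Aˣ) (ι → A)
  have orbits : MulAction.orbitRel.Quotient (ConjAct Aˣ) (ι → A) ≃
      Quot (SimConj : (ι → A) → (ι → A) → Prop) :=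
    Quot.congrRight fun x y => iff_mem_orbit.symm.trans ⟨symm, symm⟩
  have fixed (P : Aˣ) : MulAction.fixedBy (ι → A) (ConjAct.toConjAct P) ≃
      (ι → {z : A // Commute (P : A) z}) :=
    (Equiv.subtypeEquivRight fun x => by
      simp [MulAction.mem_fixedBy, funext_iff, ConjAct.units_smul_def, Units.mul_inv_eq_iff_eq_mul,
        commute_iff_eq]).trans Equiv.subtypePiEquivPi
  simp only [← Nat.card_eq_fintype_card] at burnside
  rw [← Nat.card_congr orbits]
  refine burnside.symm.trans (Fintype.sum_equiv ConjAct.toConjAct.toEquiv _ _ fun P => ?_).symm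
  rw [← Nat.card_eq_fintype_card, ← Nat.card_fun]
  exact (Nat.card_congr (fixed P)).symm

end Monoid

theorem sum_smul {R A ι κ : Type*} [CommSemiring R] [Semiring A] [Algebra R A] [Fintype κ]
    {x y : κ × ι → A} (h : SimConj x y) (c : κ → R) :
    SimConj (fun i => ∑ k, c k • x (k, i)) (fun i => ∑ k, c k • y (k, i)) := by
  obtain ⟨P, hP⟩ := h
  exact ⟨P, fun i => by simp [hP, Finset.mul_sum, Finset.sum_mul]⟩

section Diagonal

variable {R n ι : Type*} [CommRing R] [Fintype n] [DecidableEq n]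

theorem diagonal_comp_perm (d : ι → n → R) (σ : Equiv.Perm n) :
    SimConj (fun i => diagonal (d i)) (fun i => diagonal (d i ∘ σ)) := by
  let P : (Matrix n n R)ˣ := ⟨σ.permMatrix R, σ⁻¹.permMatrix R, by simp [← permMatrix_mul],
    by simp [← permMatrix_mul]⟩
  refine ⟨P, fun i => ?_⟩
  simp only [P, Units.inv_mk, Equiv.Perm.permMatrix, PEquiv.toMatrix_toPEquiv_mul,
    PEquiv.mul_toMatrix_toPEquiv, submatrix_submatrix]
  exact (submatrix_diagonal_equiv (d i) σ).symm

theorem exists_perm_of_diagonal [IsLocalRing R] {d d' : ι → n → R}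
    (h : SimConj (fun i => diagonal (d i)) (fun i => diagonal (d' i))) :
    ∃ σ : Equiv.Perm n, ∀ i, d' i ∘ σ = d i := by
  obtain ⟨P, hP⟩ := h
  have intertwines (i : ι) (a b : n) : d' i a * P.1 a b = P.1 a b * d i b := by
    have := congrFun₂ ((Units.eq_mul_inv_iff_mul_eq P).1 (hP i)) a b
    rwa [diagonal_mul, mul_diagonal] at this
  have det_isUnit : IsUnit P.1.det := (isUnit_iff_isUnit_det _).1 P.isUnit
  rw [det_apply'] at det_isUnit
  obtain ⟨σ, hσ⟩ := IsLocalRing.exists_of_isUnit_sum det_isUnit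
  refine ⟨σ, fun i => funext fun j => ?_⟩
  have entry_isUnit : IsUnit (P.1 (σ j) j) :=
    isUnit_of_dvd_unit (Finset.dvd_prod_of_mem (fun j => P.1 (σ j) j) (Finset.mem_univ j))
      (isUnit_of_mul_isUnit_right hσ.2)
  exact entry_isUnit.mul_right_cancel ((intertwines i (σ j) j).trans (mul_comm _ _))

end Diagonal

end SimConj

theorem simDiagonalizable_iff {R : Type} [CommRing R] {g : ℕ}
    {x : Fin g → Matrix (Fin 2) (Fin 2) R} :
    SimDiagonalizable x ↔ ∃ d : Fin g → Fin 2 → R, SimConj x fun i => diagonal (d i) := by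
  constructor
  · rintro ⟨P, hP⟩
    exact ⟨_, P, fun i => (hP i).diagonal_diag⟩
  · rintro ⟨d, P, hP⟩
    exact ⟨P, fun i => hP i ▸ isDiag_diagonal _⟩

/-! ### `2 × 2` matrices modulo scalars -/

/-- The `2 × 2` matrices over `R`. -/
abbrev Mat2 (R : Type*) : Type _ := Matrix (Fin 2) (Fin 2) R

theorem card_proportional {R ι : Type*} [CommRing R] [Finite R] [Fintype ι] (a : R)
    {w : ι → R} {j : ι} (hj : IsUnit (w j)) :
    Nat.card {v : ι → R // ∀ i k, a * w i * v k = a * w k * v i} =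
      Nat.card R * Nat.card {r : R // a * r = 0} ^ (Fintype.card ι - 1) := by
  classical
  obtain ⟨u, hu⟩ := hj
  have inv_mul : (↑u⁻¹ : R) * w j = 1 := by rw [← hu, Units.inv_mul]
  let shear : (ι → R) ≃ ({i // i ≠ j} → R) × R :=
    ((Equiv.funSplitAt j R).trans <|
      Equiv.prodShear (Equiv.refl R) fun r => Equiv.subRight fun i => ↑u⁻¹ * w i * r).trans
        (Equiv.prodComm _ _)
  have proportional_iff (v : ι → R) : (∀ i k, a * w i * v k = a * w k * v i) ↔
      ∀ i : {i // i ≠ j}, a * (shear v).1 i = 0 := by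
    change _ ↔ ∀ i : {i // i ≠ j}, a * (v i - ↑u⁻¹ * w i * v j) = 0
    constructor
    · intro h i
      linear_combination ↑u⁻¹ * h j i - a * v i * inv_mul
    · intro h
      have annihilates (i : ι) : a * (v i - ↑u⁻¹ * w i * v j) = 0 := by
        by_cases hi : i = j
        · subst hi
          linear_combination -a * v i * inv_mul
        · exact h ⟨i, hi⟩
      intro i k
      linear_combination w i * annihilates k - w k * annihilates i
  have split : {v : ι → R // ∀ i k, a * w i * v k = a * w k * v i} ≃
      {s : {i // i ≠ j} → R // ∀ i, a * s i = 0} × R :=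
    (shear.subtypeEquiv proportional_iff).trans
      (Equiv.prodSubtypeFstEquivSubtypeProd (p := fun s : {i // i ≠ j} → R => ∀ i, a * s i = 0))
  rw [Nat.card_congr split, Nat.card_prod, card_subtype_forall_apply (a * · = 0),
    Nat.card_eq_fintype_card (α := {i // i ≠ j}), Fintype.card_subtype_compl,
    Fintype.card_subtype_eq, mul_comm]

namespace Mat2

section CommRing

variable {R S : Type*} [CommRing R] [CommRing S]

/-- The coordinates of a `2 × 2` matrix modulo scalar matrices. -/
def offScalar : Mat2 R →ₗ[R] Fin 3 → R where
  toFun m := ![m 0 0 - m 1 1, m 0 1, m 1 0]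
  map_add' m n := by simp [add_sub_add_comm]
  map_smul' c m := by simp [mul_sub]

/-- A `2 × 2` matrix is encoded by its coordinates modulo scalars and its lower right entry. -/
def offScalarEquiv : Mat2 R ≃ (Fin 3 → R) × R where
  toFun m := (offScalar m, m 1 1)
  invFun p := !![p.1 0 + p.2, p.1 1; p.1 2, p.2]
  left_inv m := by
    ext i j
    fin_cases i <;> fin_cases j <;> simp [offScalar]
  right_inv p := by
    refine Prod.ext (funext fun i => ?_) rfl
    fin_cases i <;> simp [offScalar]

theorem offScalar_apply (m : Mat2 R) : offScalar m = ![m 0 0 - m 1 1, m 0 1, m 1 0] := rfl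

theorem offScalar_map (φ : R →+* S) (m : Mat2 R) : offScalar (m.map φ) = φ ∘ offScalar m := by
  ext i
  fin_cases i <;> simp [offScalar_apply]

theorem commute_iff {m z : Mat2 R} :
    Commute m z ↔ ∀ i j, offScalar m i * offScalar z j = offScalar m j * offScalar z i := by
  simp only [commute_iff_eq, ← ext_iff, Fin.forall_fin_two, mul_apply, Fin.sum_univ_two]
  constructor
  · rintro ⟨⟨h₀₀, h₀₁⟩, h₁₀, -⟩ i j
    fin_cases i <;> fin_cases j <;> simp [offScalar_apply] <;> grind
  · intro h
    have h₀₁ := h 0 1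
    have h₀₂ := h 0 2
    have h₁₂ := h 1 2
    simp only [offScalar_apply, cons_val] at h₀₁ h₀₂ h₁₂
    grind

theorem card_centralizer [Finite R] {m : Mat2 R} {a : R} {w : Fin 3 → R} {j : Fin 3}
    (hj : IsUnit (w j)) (hm : offScalar m = a • w) :
    Nat.card {z : Mat2 R // Commute m z} = Nat.card R ^ 2 * Nat.card {r : R // a * r = 0} ^ 2 := by
  have centralizer : {z : Mat2 R // Commute m z} ≃
      {v : Fin 3 → R // ∀ i k, a * w i * v k = a * w k * v i} × R :=
    (offScalarEquiv.subtypeEquiv fun z => commute_iff.trans (by simp only [hm]; rfl)).trans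
        (Equiv.prodSubtypeFstEquivSubtypeProd
          (p := fun v : Fin 3 → R => ∀ i k, a * w i * v k = a * w k * v i))
  rw [Nat.card_congr centralizer, Nat.card_prod, card_proportional a hj, Fintype.card_fin]
  ring

theorem det_eq_offScalar (m : Mat2 R) :
    m.det = m 1 1 ^ 2 + m 1 1 * offScalar m 0 - offScalar m 1 * offScalar m 2 := by
  simp only [det_fin_two, offScalar_apply, cons_val]
  ring

theorem discr_eq_offScalar (m : Mat2 R) :
    m.discr = offScalar m 0 ^ 2 + 4 * (offScalar m 1 * offScalar m 2) := by
  simp only [discr_fin_two, trace_fin_two, det_fin_two, offScalar_apply, cons_val]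
  ring

/-- The matrix of multiplication by the class of `X` in `R[X] / (X² - T X + D)`. -/
def companion (T D : R) : Mat2 R := !![0, -D; 1, T]

theorem companion_map (φ : R →+* S) (T D : R) :
    (companion T D).map φ = companion (φ T) (φ D) := by
  simp [companion, ← ext_iff, Fin.forall_fin_two]

theorem trace_companion (T D : R) : (companion T D).trace = T := by
  simp [companion, trace_fin_two]

theorem det_companion (T D : R) : (companion T D).det = D := by
  simp [companion, det_fin_two]

theorem discr_companion (T D : R) : (companion T D).discr = T ^ 2 - 4 * D := by
  rw [discr_fin_two, trace_companion, det_companion]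

theorem discr_units_conj (P : (Mat2 R)ˣ) (m : Mat2 R) :
    (P * m * (P⁻¹ : (Mat2 R)ˣ) : Mat2 R).discr = m.discr := by
  simp only [discr_fin_two, trace_units_conj, det_units_conj]

/-- The matrix with columns `e` and `m e`. -/
def krylov (m : Mat2 R) (e : Fin 2 → R) : Mat2 R := (of ![e, m *ᵥ e])ᵀ

theorem mul_krylov (m : Mat2 R) (e : Fin 2 → R) :
    m * krylov m e = krylov m e * companion m.trace m.det := by
  simp only [krylov, companion, ← ext_iff, Fin.forall_fin_two, mul_apply, Fin.sum_univ_two,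
    transpose_apply, of_apply, mulVec, dotProduct, cons_val, trace_fin_two, det_fin_two]
  refine ⟨⟨?_, ?_⟩, ?_, ?_⟩ <;> ring

theorem det_krylov (m : Mat2 R) (e : Fin 2 → R) :
    (krylov m e).det = offScalar m 2 * e 0 ^ 2 - offScalar m 0 * e 0 * e 1
      - offScalar m 1 * e 1 ^ 2 := by
  simp only [krylov, det_fin_two, transpose_apply, of_apply, mulVec, dotProduct, Fin.sum_univ_two,
    cons_val, offScalar_apply]
  ring

end CommRing

section IsLocalRing

variable {R : Type*} [CommRing R] [IsLocalRing R]

theorem isUnit_iff_of_offScalar_mem {I : Ideal R} (hI : I ≠ ⊤) {m : Mat2 R}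
    (hm : ∀ i, offScalar m i ∈ I) : IsUnit m ↔ IsUnit (m 1 1) := by
  have residue_offScalar (i : Fin 3) : IsLocalRing.residue R (offScalar m i) = 0 :=
    (IsLocalRing.residue_eq_zero_iff _).2 (IsLocalRing.le_maximalIdeal hI (hm i))
  rw [isUnit_iff_isUnit_det, ← IsLocalRing.residue_ne_zero_iff_isUnit,
    ← IsLocalRing.residue_ne_zero_iff_isUnit, det_eq_offScalar]
  simp [residue_offScalar]

theorem card_units_offScalar_mem {I : Ideal R} (hI : I ≠ ⊤) :
    Nat.card {P : (Mat2 R)ˣ // ∀ i, offScalar P.1 i ∈ I} = Nat.card Rˣ * Nat.card I ^ 3 := by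
  have units : {P : (Mat2 R)ˣ // ∀ i, offScalar P.1 i ∈ I} ≃
      {m : Mat2 R // (∀ i, offScalar m i ∈ I) ∧ IsUnit (m 1 1)} :=
    { toFun P := ⟨P.1, P.2, (isUnit_iff_of_offScalar_mem hI P.2).1 P.1.isUnit⟩
      invFun m := ⟨((isUnit_iff_of_offScalar_mem hI m.2.1).2 m.2.2).unit, m.2.1⟩
      left_inv P := Subtype.ext (Units.ext rfl)
      right_inv m := rfl }
  have coordinates : {m : Mat2 R // (∀ i, offScalar m i ∈ I) ∧ IsUnit (m 1 1)} ≃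
      {v : Fin 3 → R // ∀ i, v i ∈ I} × {r : R // IsUnit r} :=
    (offScalarEquiv.subtypeEquiv fun _ => Iff.rfl).trans
        (Equiv.subtypeProdEquivProd (p := fun v => ∀ i, v i ∈ I) (q := IsUnit))
  rw [Nat.card_congr (units.trans coordinates), Nat.card_prod,
    card_subtype_forall_apply (· ∈ I), Nat.card_fin, mul_comm,
    card_isUnit]

theorem exists_isUnit_offScalar {m : Mat2 R} (h : IsUnit m.discr) :
    ∃ j, IsUnit (offScalar m j) := by
  rw [discr_eq_offScalar] at h
  rcases IsLocalRing.isUnit_or_isUnit_of_isUnit_add h with h | h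
  · exact ⟨0, (isUnit_pow_iff two_ne_zero).1 h⟩
  · exact ⟨1, isUnit_of_mul_isUnit_left (isUnit_of_mul_isUnit_right h)⟩

theorem exists_isUnit_det_krylov {m : Mat2 R} {j : Fin 3} (h : IsUnit (offScalar m j)) :
    ∃ e, IsUnit (krylov m e).det := by
  have det₁₀ : (krylov m ![1, 0]).det = offScalar m 2 := by simp [det_krylov]
  have det₀₁ : (krylov m ![0, 1]).det = -offScalar m 1 := by simp [det_krylov]
  have det₁₁ : (krylov m ![1, 1]).det = offScalar m 2 - offScalar m 0 - offScalar m 1 := by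
    simp [det_krylov]
  by_contra! not_isUnit
  have h₂ : ¬IsUnit (offScalar m 2) := det₁₀ ▸ not_isUnit ![1, 0]
  have h₁ : ¬IsUnit (offScalar m 1) := fun h₁ => not_isUnit ![0, 1] (det₀₁ ▸ h₁.neg)
  have h₀ : ¬IsUnit (offScalar m 0) := fun h₀ => by
    have sum_isUnit : IsUnit (offScalar m 2 +
        (-(krylov m ![1, 1]).det + -offScalar m 1)) := by
      convert h₀ using 1
      rw [det₁₁]
      ring
    rcases IsLocalRing.isUnit_or_isUnit_of_isUnit_add sum_isUnit with h | h
    · exact h₂ h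
    · rcases IsLocalRing.isUnit_or_isUnit_of_isUnit_add h with h | h
      · exact not_isUnit ![1, 1] ((IsUnit.neg_iff _).1 h)
      · exact h₁ ((IsUnit.neg_iff _).1 h)
  fin_cases j
  exacts [h₀ h, h₁ h, h₂ h]

theorem exists_conj_eq_companion {m : Mat2 R} {j : Fin 3} (h : IsUnit (offScalar m j)) :
    ∃ P : (Mat2 R)ˣ, P * m * (P⁻¹ : (Mat2 R)ˣ) = companion m.trace m.det := by
  obtain ⟨e, he⟩ := exists_isUnit_det_krylov h
  obtain ⟨K, hK⟩ := (isUnit_iff_isUnit_det _).2 he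
  refine ⟨K⁻¹, ?_⟩
  rw [mul_assoc, inv_inv, Units.inv_mul_eq_iff_eq_mul, hK, mul_krylov]

end IsLocalRing

end Mat2

/-! ### Truncated polynomial rings -/

section IsLocalHom

variable {R S : Type*}

theorem card_units_eq_card_units_mul_card_ker [Ring R] [Ring S] (φ : R →+* S) [IsLocalHom φ]
    (hφ : Function.Surjective φ) : Nat.card Rˣ = Nat.card Sˣ * Nat.card (RingHom.ker φ) := by
  have units_eq_preimage : {r : R | IsUnit r} = φ ⁻¹' {s | IsUnit s} :=
    Set.ext fun r => (isUnit_map_iff φ r).symm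
  rw [← card_isUnit, ← card_isUnit]
  exact (congrArg (fun s : Set R => Nat.card s) units_eq_preimage).trans
    (card_preimage_eq_card_mul_card_ker (f := φ.toAddMonoidHom) hφ {s | IsUnit s})

variable [CommRing R] [CommRing S] {n : Type*} [Fintype n] [DecidableEq n]

instance isLocalHom_mapMatrix (φ : R →+* S) [IsLocalHom φ] :
    IsLocalHom (φ.mapMatrix : Matrix n n R →+* Matrix n n S) where
  map_nonunit m hm := by
    rw [isUnit_iff_isUnit_det, ← RingHom.map_det] at hm
    exact (isUnit_iff_isUnit_det m).2 (isUnit_of_map_unit φ _ hm)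

theorem card_ker_mapMatrix (φ : R →+* S) :
    Nat.card (RingHom.ker (φ.mapMatrix : Matrix n n R →+* Matrix n n S)) =
      (Nat.card (RingHom.ker φ) ^ Nat.card n) ^ Nat.card n := by
  have mem_iff (m : Matrix n n R) :
      m ∈ RingHom.ker (φ.mapMatrix : Matrix n n R →+* Matrix n n S) ↔
        ∀ i j, m i j ∈ RingHom.ker φ := by
    simp [RingHom.mem_ker, ← ext_iff]
  have card_rows := card_subtype_forall_apply (ι := n) fun r : n → R => ∀ j, r j ∈ RingHom.ker φ
  rw [card_subtype_forall_apply (· ∈ RingHom.ker φ)] at card_rows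
  exact (Nat.card_congr (Equiv.subtypeEquivRight mem_iff)).trans card_rows

end IsLocalHom

namespace TruncRing

section CommRing

variable {F : Type} [CommRing F] {α : ℕ}

theorem mk_eq_zero_iff {p : F[X]} :
    (Ideal.Quotient.mk _ p : TruncRing F α) = 0 ↔ X ^ α ∣ p := by
  rw [Ideal.Quotient.eq_zero_iff_mem, Ideal.mem_span_singleton]

theorem tvar_pow (k : ℕ) : tvar F α ^ k = Ideal.Quotient.mk _ (X ^ k : F[X]) := by
  rw [tvar, map_pow]

theorem tvar_pow_self : tvar F α ^ α = 0 := by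
  rw [tvar_pow, mk_eq_zero_iff]

theorem tvar_pow_dvd_mk {k : ℕ} (hk : k ≤ α) {p : F[X]} :
    tvar F α ^ k ∣ Ideal.Quotient.mk _ p ↔ X ^ k ∣ p := by
  rw [tvar_pow]
  refine ⟨?_, map_dvd _⟩
  rintro ⟨c, hc⟩
  obtain ⟨c, rfl⟩ := Ideal.Quotient.mk_surjective c
  rw [← sub_eq_zero, ← map_mul, ← map_sub, mk_eq_zero_iff] at hc
  exact (dvd_iff_dvd_of_dvd_sub ((pow_dvd_pow _ hk).trans hc)).2 (dvd_mul_right _ _)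

theorem tvar_pow_mul_eq_zero_iff {k : ℕ} (hk : k ≤ α) {r : TruncRing F α} :
    tvar F α ^ k * r = 0 ↔ tvar F α ^ (α - k) ∣ r := by
  obtain ⟨p, rfl⟩ := Ideal.Quotient.mk_surjective r
  rw [tvar_pow_dvd_mk (Nat.sub_le _ _), tvar_pow, ← map_mul, mk_eq_zero_iff, X_pow_dvd_iff,
    X_pow_dvd_iff]
  constructor
  · intro h d hd
    simpa using h (d + k) (by omega)
  · intro h d hd
    rw [coeff_X_pow_mul']
    split_ifs
    · exact h _ (by omega)
    · rfl

variable (F) in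
/-- Reduction modulo `t`. -/
noncomputable def residue (α : ℕ) [NeZero α] : TruncRing F α →+* F :=
  Ideal.Quotient.lift _ constantCoeff fun p hp => by
    obtain ⟨c, rfl⟩ := Ideal.mem_span_singleton.1 hp
    simp [NeZero.ne' α]

variable [NeZero α]

@[simp]
theorem residue_mk (p : F[X]) : residue F α (Ideal.Quotient.mk _ p) = p.coeff 0 := rfl

@[simp]
theorem residue_algebraMap (a : F) : residue F α (algebraMap F _ a) = a :=
  coeff_C_zero

theorem residue_surjective : Function.Surjective (residue F α) :=
  fun a => ⟨_, residue_algebraMap a⟩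

theorem residue_eq_zero_iff {r : TruncRing F α} : residue F α r = 0 ↔ tvar F α ∣ r := by
  obtain ⟨p, rfl⟩ := Ideal.Quotient.mk_surjective r
  rw [← pow_one (tvar F α), tvar_pow_dvd_mk NeZero.one_le, residue_mk, pow_one, X_dvd_iff]

theorem isNilpotent_of_residue_eq_zero {r : TruncRing F α} (hr : residue F α r = 0) :
    IsNilpotent r := by
  obtain ⟨s, rfl⟩ := residue_eq_zero_iff.1 hr
  exact (Commute.all _ _).isNilpotent_mul_right ⟨α, tvar_pow_self⟩

instance isLocalHom_residue : IsLocalHom (residue F α) where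
  map_nonunit r hr := by
    have nilpotent : IsNilpotent (r - algebraMap F _ (residue F α r)) :=
      isNilpotent_of_residue_eq_zero (by simp)
    simpa using nilpotent.isUnit_add_left_of_commute (hr.map (algebraMap F (TruncRing F α)))
      (Commute.all _ _)

end CommRing

section Field

variable {F : Type} [Field F] {α : ℕ}

variable (F α) in
/-- The powers of `t`, as a basis of `F[t]/(t^α)`. -/
noncomputable def basis : Module.Basis (Fin α) F (TruncRing F α) :=
  (AdjoinRoot.powerBasis' (monic_X_pow α)).basis.reindex
    (finCongr ((AdjoinRoot.powerBasis'_dim _).trans (natDegree_X_pow α)))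

theorem basis_apply (k : Fin α) : basis F α k = tvar F α ^ (k : ℕ) := by
  let pb := AdjoinRoot.powerBasis' (monic_X_pow (R := F) α)
  exact (pb.basis.reindex_apply _ k).trans (pb.basis_eq_pow _)

theorem smul_basis (a : F) (k : Fin α) :
    a • basis F α k = algebraMap F _ a * tvar F α ^ (k : ℕ) := by
  rw [basis_apply]
  exact Algebra.smul_def a (tvar F α ^ (k : ℕ))

instance [Finite F] : Finite (TruncRing F α) := Finite.of_equiv _ (basis F α).equivFun.toEquiv.symm

theorem card_eq [Finite F] : Nat.card (TruncRing F α) = Nat.card F ^ α := by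
  rw [Nat.card_congr (basis F α).equivFun.toEquiv, Nat.card_fun, Nat.card_fin]

theorem card_tvar_pow_dvd [Finite F] {k : ℕ} (hk : k ≤ α) :
    Nat.card {r : TruncRing F α // tvar F α ^ k ∣ r} = Nat.card F ^ (α - k) := by
  have le : Ideal.span {(X : F[X]) ^ α} ≤ Ideal.span {X ^ k} :=
    Ideal.span_singleton_le_span_singleton.2 (pow_dvd_pow X hk)
  have mem_ker_iff (r : TruncRing F α) :
      r ∈ (Ideal.Quotient.factor le).toAddMonoidHom.ker ↔ tvar F α ^ k ∣ r := by
    change Ideal.Quotient.factor le r = 0 ↔ _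
    obtain ⟨p, rfl⟩ := Ideal.Quotient.mk_surjective r
    rw [Ideal.Quotient.factor_mk, tvar_pow_dvd_mk hk, mk_eq_zero_iff]
  have card_eq_mul := card_preimage_eq_card_mul_card_ker
    (f := (Ideal.Quotient.factor le).toAddMonoidHom) (Ideal.Quotient.factor_surjective le) Set.univ
  rw [Set.preimage_univ, Nat.card_univ, Nat.card_univ, card_eq, card_eq,
    Nat.card_congr (Equiv.subtypeEquivRight mem_ker_iff), ← pow_mul_pow_sub _ hk] at card_eq_mul
  exact (Nat.eq_of_mul_eq_mul_left (pow_pos Nat.card_pos k) card_eq_mul).symm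

theorem tvar_pow_dvd_tvar_pow_mul_iff {r : TruncRing F α} (hr : IsUnit r) {j k : ℕ} (hj : j ≤ α) :
    tvar F α ^ j ∣ tvar F α ^ k * r ↔ j ≤ k := by
  rw [hr.dvd_mul_right]
  rcases le_or_gt j k with hjk | hkj
  · exact iff_of_true (pow_dvd_pow _ hjk) hjk
  · refine iff_of_false ?_ hkj.not_ge
    rw [tvar_pow k, tvar_pow_dvd_mk hj, pow_dvd_pow_iff X_ne_zero not_isUnit_X]
    exact hkj.not_ge

variable [NeZero α]

instance isLocalRing : IsLocalRing (TruncRing F α) :=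
  (residue F α).domain_isLocalRing

theorem not_isUnit_iff {r : TruncRing F α} : ¬IsUnit r ↔ tvar F α ∣ r := by
  rw [← isUnit_map_iff (residue F α), isUnit_iff_ne_zero, not_not, residue_eq_zero_iff]

theorem card_ker_residue [Finite F] :
    Nat.card (RingHom.ker (residue F α)) = Nat.card F ^ (α - 1) := by
  rw [← card_tvar_pow_dvd NeZero.one_le, pow_one]
  exact Nat.card_congr (Equiv.subtypeEquivRight fun r => residue_eq_zero_iff)

theorem card_units [Finite F] :
    Nat.card (TruncRing F α)ˣ = (Nat.card F - 1) * Nat.card F ^ (α - 1) := by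
  rw [card_units_eq_card_units_mul_card_ker (residue F α) residue_surjective, card_ker_residue,
    Nat.card_units]

theorem card_units_mat2 [Finite F] : Nat.card (Mat2 (TruncRing F α))ˣ =
    (Nat.card F ^ 2 - 1) * (Nat.card F ^ 2 - Nat.card F) * Nat.card F ^ (4 * (α - 1)) := by
  have := Fintype.ofFinite F
  have card_GL : Nat.card (Mat2 F)ˣ = (Nat.card F ^ 2 - 1) * (Nat.card F ^ 2 - Nat.card F) := by
    rw [Nat.card_eq_fintype_card (α := F)]
    simpa [Fin.prod_univ_two] using card_GL_field (𝔽 := F) 2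
  have mapMatrix_surjective :
      Function.Surjective ((residue F α).mapMatrix : Mat2 _ →+* Mat2 F) := fun m =>
    ⟨m.map (Function.surjInv residue_surjective), by
      ext i j
      exact Function.surjInv_eq residue_surjective _⟩
  rw [card_units_eq_card_units_mul_card_ker (residue F α).mapMatrix
    mapMatrix_surjective, card_GL, card_ker_mapMatrix, card_ker_residue, Nat.card_fin]
  ring

theorem exists_eq_tvar_pow_smul {ι : Type*} [Nonempty ι] (w : ι → TruncRing F α) :
    ∃ k ≤ α, ∃ v : ι → TruncRing F α, w = tvar F α ^ k • v ∧ ∃ i, IsUnit (v i) := by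
  classical
  let divides (k : ℕ) : Prop := ∀ i, tvar F α ^ k ∣ w i
  have divides_level : divides (Nat.findGreatest divides α) :=
    Nat.findGreatest_spec α.zero_le fun i => by simp
  rcases (Nat.findGreatest_le (P := divides) α).eq_or_lt with hα | hlt
  · rw [hα] at divides_level
    refine ⟨α, le_rfl, 1, ?_, Classical.arbitrary ι, isUnit_one⟩
    simpa [divides, tvar_pow_self, funext_iff] using divides_level
  · choose v hv using divides_level
    refine ⟨_, hlt.le, v, funext hv, ?_⟩
    by_contra! not_isUnit
    have divides_succ : divides (Nat.findGreatest divides α + 1) := fun i => by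
      rw [hv i, pow_succ]
      exact mul_dvd_mul_left _ (not_isUnit_iff.1 (not_isUnit i))
    exact (Nat.le_findGreatest hlt divides_succ).not_gt (Nat.lt_succ_self _)

end Field

section Map

variable {F K : Type} [Field F] [Field K] {α : ℕ} (φ : F →+* K)

@[simp]
theorem truncMap_mk (p : F[X]) :
    truncMap φ α (Ideal.Quotient.mk _ p) = Ideal.Quotient.mk _ (p.map φ) := rfl

@[simp]
theorem truncMap_tvar : truncMap φ α (tvar F α) = tvar K α := by
  simp [tvar]

theorem truncMap_algebraMap (a : F) :
    truncMap φ α (algebraMap F _ a) = algebraMap K _ (φ a) :=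
  congrArg (Ideal.Quotient.mk _) (map_C φ)

theorem truncMap_injective : Function.Injective (truncMap φ α) :=
  (injective_iff_map_eq_zero _).2 fun r hr => by
    obtain ⟨p, rfl⟩ := Ideal.Quotient.mk_surjective r
    rw [truncMap_mk, mk_eq_zero_iff, ← Polynomial.map_X φ, ← Polynomial.map_pow,
      Polynomial.map_dvd_map'] at hr
    exact mk_eq_zero_iff.2 hr

theorem residue_truncMap [NeZero α] (r : TruncRing F α) :
    residue K α (truncMap φ α r) = φ (residue F α r) := by
  obtain ⟨p, rfl⟩ := Ideal.Quotient.mk_surjective r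
  simp

end Map

end TruncRing

/-! ### Classes of all tuples -/

namespace TruncRing

variable {F : Type} [Field F] [Finite F] {α : ℕ} [NeZero α]

theorem exists_scalar_level (m : Mat2 (TruncRing F α)) : ∃ k ≤ α,
    (∀ j ≤ α, (∀ i, tvar F α ^ j ∣ Mat2.offScalar m i) ↔ j ≤ k) ∧
      Nat.card {z // Commute m z} = Nat.card F ^ (2 * (α + k)) := by
  obtain ⟨k, hk, v, hv, i₀, hi₀⟩ := exists_eq_tvar_pow_smul (Mat2.offScalar m)
  refine ⟨k, hk, fun j hj => ⟨fun h => ?_, fun hjk i => ?_⟩, ?_⟩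
  · exact (tvar_pow_dvd_tvar_pow_mul_iff hi₀ hj).1 (by simpa [hv] using h i₀)
  · rw [hv]
    exact (pow_dvd_pow _ hjk).mul_right _
  · rw [Mat2.card_centralizer hi₀ hv,
      Nat.card_congr (Equiv.subtypeEquivRight fun r => tvar_pow_mul_eq_zero_iff hk),
      card_tvar_pow_dvd (Nat.sub_le _ _), card_eq, Nat.sub_sub_self hk]
    ring

theorem card_units_tvar_pow_dvd_offScalar {j : ℕ} (hj : j < α) :
    Nat.card {P : (Mat2 (TruncRing F α))ˣ // ∀ i, tvar F α ^ (j + 1) ∣ Mat2.offScalar P.1 i} =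
      (Nat.card F - 1) * Nat.card F ^ (α - 1) * (Nat.card F ^ (α - (j + 1))) ^ 3 := by
  have ne_top : Ideal.span {tvar F α ^ (j + 1)} ≠ ⊤ := by
    rw [Ne, Ideal.span_singleton_eq_top, not_isUnit_iff]
    exact dvd_pow_self _ j.succ_ne_zero
  have card_span : Nat.card (Ideal.span {tvar F α ^ (j + 1)}) = Nat.card F ^ (α - (j + 1)) := by
    rw [← card_tvar_pow_dvd hj]
    exact Nat.card_congr (Equiv.subtypeEquivRight fun r => Ideal.mem_span_singleton)
  rw [← card_units, ← card_span, ← Mat2.card_units_offScalar_mem ne_top]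
  simp only [Ideal.mem_span_singleton]

theorem card_quot_simConj_mul_card_units (ι : Type*) [Finite ι] :
    (Nat.card (Quot (SimConj : (ι → Mat2 (TruncRing F α)) → _ → Prop)) : ℚ) *
        Nat.card (Mat2 (TruncRing F α))ˣ =
      Nat.card (Mat2 (TruncRing F α))ˣ * (Nat.card F ^ (2 * α)) ^ Nat.card ι +
        ∑ j ∈ Finset.range α,
          ((Nat.card F - 1) * Nat.card F ^ (α - 1) * (Nat.card F ^ (α - (j + 1))) ^ 3 : ℚ) *
          ((Nat.card F ^ (2 * (α + (j + 1)))) ^ Nat.card ι -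
            (Nat.card F ^ (2 * (α + j))) ^ Nat.card ι) := by
  classical
  have := Fintype.ofFinite ι
  have := Fintype.ofFinite (Mat2 (TruncRing F α))ˣ
  choose level level_le level_spec card_centralizer using exists_scalar_level (F := F) (α := α)
  have card_lt_level : ∀ j ∈ Finset.range α,
      (({P : (Mat2 (TruncRing F α))ˣ | j < level P} : Finset _).card : ℚ) =
        (Nat.card F - 1) * Nat.card F ^ (α - 1) * (Nat.card F ^ (α - (j + 1))) ^ 3 := by
    intro j hj
    rw [← Nat.cast_pred Nat.card_pos]
    norm_cast
    rw [← card_units_tvar_pow_dvd_offScalar (Finset.mem_range.1 hj), ← Fintype.card_subtype,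
      ← Nat.card_eq_fintype_card]
    exact Nat.card_congr (Equiv.subtypeEquivRight fun P =>
      (level_spec P _ (Finset.mem_range.1 hj)).symm)
  have burnside := SimConj.card_quot_mul_card_units (A := Mat2 (TruncRing F α)) (ι := ι)
  simp only [card_centralizer] at burnside
  rw [← Nat.cast_mul, burnside, Nat.cast_sum]
  push_cast
  rw [sum_comp_eq_sum_card_lt (ℓ := fun P : (Mat2 (TruncRing F α))ˣ => level P) Finset.univ
      (fun P _ => level_le P) fun k => ((Nat.card F : ℚ) ^ (2 * (α + k))) ^ Fintype.card ι,
    Finset.card_univ, ← Nat.card_eq_fintype_card, ← Nat.card_eq_fintype_card, add_zero]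
  exact congrArg _ (Finset.sum_congr rfl fun j hj => by rw [card_lt_level j hj])

end TruncRing

theorem sum_range_mul_pow_sub_pow_eq {K : Type*} [Field K] {x : K} (hx : x ≠ 0) {α : ℕ}
    (hα : α ≠ 0) {g : ℕ} (ratio_ne_one : x ^ (2 * (g : ℤ) - 3) ≠ 1) :
    ∑ j ∈ Finset.range α, (x - 1) * x ^ (α - 1) * (x ^ (α - (j + 1))) ^ 3 *
        ((x ^ (2 * (α + (j + 1)))) ^ g - (x ^ (2 * (α + j))) ^ g) =
      (x - 1) * x ^ (4 * (α - 1)) * x ^ (2 * α * g) * (x ^ (2 * g) - 1) *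
        ((x ^ ((α : ℤ) * (2 * g - 3)) - 1) / (x ^ (2 * (g : ℤ) - 3) - 1)) := by
  obtain ⟨n, rfl⟩ := Nat.exists_eq_succ_of_ne_zero hα
  have ratio_pow (j : ℕ) : (x ^ (2 * (g : ℤ) - 3)) ^ j = x ^ (2 * g * j) / x ^ (3 * j) := by
    rw [zpow_sub₀ hx, div_pow, mul_comm (2 : ℤ), _root_.zpow_mul, zpow_natCast]
    norm_cast
    ring
  have geometric : ∀ j ∈ Finset.range (n + 1), (x - 1) * x ^ n * (x ^ (n + 1 - (j + 1))) ^ 3 *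
      ((x ^ (2 * (n + 1 + (j + 1)))) ^ g - (x ^ (2 * (n + 1 + j))) ^ g) =
        (x - 1) * x ^ (4 * n) * x ^ (2 * (n + 1) * g) * (x ^ (2 * g) - 1) *
          (x ^ (2 * (g : ℤ) - 3)) ^ j := by
    intro j hj
    obtain ⟨d, rfl⟩ := Nat.exists_eq_add_of_le (Nat.lt_succ_iff.1 (Finset.mem_range.1 hj))
    rw [ratio_pow, Nat.add_sub_add_right, Nat.add_sub_cancel_left]
    field_simp
    ring
  rw [Nat.succ_eq_add_one, Nat.add_sub_cancel, Finset.sum_congr rfl geometric, ← Finset.mul_sum,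
    geom_sum_eq ratio_ne_one, ← zpow_natCast (x ^ (2 * (g : ℤ) - 3)), ← _root_.zpow_mul,
    mul_comm (2 * (g : ℤ) - 3)]

theorem TruncRing.card_quot_simConj {F : Type} [Field F] [Finite F] {α : ℕ} [NeZero α] (g : ℕ) :
    (Nat.card (Quot (SimConj : (Fin g → Mat2 (TruncRing F α)) → _ → Prop)) : ℚ) =
      (Nat.card F : ℚ) ^ (2 * (α * g)) +
        (Nat.card F : ℚ) ^ (2 * (α : ℤ) * (g : ℤ) - 1)
          * ((Nat.card F : ℚ) ^ (2 * (g : ℤ)) - 1)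
          * ((Nat.card F : ℚ) ^ ((α : ℤ) * (2 * (g : ℤ) - 3)) - 1)
        / (((Nat.card F : ℚ) ^ (2 : ℤ) - 1)
          * ((Nat.card F : ℚ) ^ (2 * (g : ℤ) - 3) - 1)) := by
  have burnside := card_quot_simConj_mul_card_units (F := F) (α := α) (Fin g)
  have one_lt : 1 < Nat.card F := Finite.one_lt_card
  have card_units : (Nat.card (Mat2 (TruncRing F α))ˣ : ℚ) =
      ((Nat.card F : ℚ) ^ 2 - 1) * ((Nat.card F : ℚ) * (Nat.card F - 1)) *
        (Nat.card F : ℚ) ^ (4 * (α - 1)) := by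
    rw [card_units_mat2]
    push_cast [Nat.cast_sub (Nat.one_le_pow 2 _ Nat.card_pos),
      Nat.cast_sub (Nat.le_self_pow two_ne_zero (Nat.card F))]
    ring
  rw [card_units, Nat.card_fin] at burnside
  generalize Nat.card F = q at *
  have one_lt_cast : (1 : ℚ) < q := by exact_mod_cast one_lt
  have hq : (q : ℚ) ≠ 0 := by positivity
  have ratio_ne_one : (q : ℚ) ^ (2 * (g : ℤ) - 3) ≠ 1 := by
    rw [Ne, zpow_eq_one_iff_right₀ (by positivity) one_lt_cast.ne']
    omega
  rw [sum_range_mul_pow_sub_pow_eq hq (NeZero.ne α) ratio_ne_one] at burnside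
  have sub_one_ne : (q : ℚ) - 1 ≠ 0 := sub_ne_zero.2 one_lt_cast.ne'
  have sq_sub_one_ne : (q : ℚ) ^ 2 - 1 ≠ 0 :=
    sub_ne_zero.2 (one_lt_pow₀ one_lt_cast two_ne_zero).ne'
  have ratio_sub_one_ne := sub_ne_zero.2 ratio_ne_one
  have exponent₁ : (q : ℚ) ^ (2 * (α : ℤ) * g - 1) = q ^ (2 * α * g) / q := by
    rw [zpow_sub_one₀ hq, div_eq_mul_inv]
    norm_cast
  have exponent₂ : (q : ℚ) ^ (2 * (g : ℤ)) = q ^ (2 * g) := by norm_cast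
  rw [exponent₁, exponent₂, zpow_ofNat]
  generalize (q : ℚ) ^ (2 * (g : ℤ) - 3) = ratio at *
  refine mul_right_cancel₀ (mul_ne_zero (mul_ne_zero sq_sub_one_ne (mul_ne_zero hq sub_one_ne))
    (pow_ne_zero (4 * (α - 1)) hq)) (burnside.trans ?_)
  field_simp
  ring

/-! ### Matrices commuting with a separable matrix -/

theorem commute_units_conj {M : Type*} [Monoid M] {a b : M} (h : Commute a b) (P : Mˣ) :
    Commute (P * a * (P⁻¹ : Mˣ)) (P * b * (P⁻¹ : Mˣ)) :=
  h.map (MulDistribMulAction.toMonoidHom M (ConjAct.toConjAct P))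

namespace Mat2

section CommRing

variable {R S : Type*} [CommRing R] [CommRing S]

theorem commute_of_commute {C m m' : Mat2 R} {j : Fin 3} (hj : IsUnit (offScalar C j))
    (hm : Commute C m) (hm' : Commute C m') : Commute m m' := by
  rw [commute_iff] at hm hm' ⊢
  intro i k
  refine (hj.mul hj).mul_left_cancel ?_
  linear_combination offScalar C j * offScalar m' k * hm j i -
    offScalar C j * offScalar m' i * hm j k + offScalar C i * offScalar m j * hm' j k -
    offScalar C k * offScalar m j * hm' j i

theorem discr_map (φ : R →+* S) (m : Mat2 R) : (m.map φ).discr = φ m.discr := by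
  simp [discr_eq_offScalar, offScalar_map, map_ofNat φ 4]

theorem discr_eq_sq_mul {m C : Mat2 R} {v : R} (h : offScalar m = v • offScalar C) :
    m.discr = v ^ 2 * C.discr := by
  simp only [discr_eq_offScalar, h, Pi.smul_apply, smul_eq_mul]
  ring

theorem add_adjugate (m : Mat2 R) : m + m.adjugate = m.trace • 1 := by
  simp [← ext_iff, Fin.forall_fin_two, adjugate_fin_two, trace_fin_two, add_comm]

theorem trace_pow_char_pow (p : ℕ) [Fact p.Prime] [CharP R p] (n : ℕ) (m : Mat2 R) :
    (m ^ p ^ n).trace = m.trace ^ p ^ n := by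
  have commute_adjugate : Commute m m.adjugate :=
    (mul_adjugate m).trans (adjugate_mul m).symm
  have smul_one_eq : (m ^ p ^ n).trace • (1 : Mat2 R) = m.trace ^ p ^ n • 1 := by
    rw [← add_adjugate, adjugate_pow, ← add_pow_char_pow_of_commute p n commute_adjugate,
      add_adjugate, _root_.smul_pow, one_pow]
  simpa using congrFun₂ smul_one_eq 0 0

theorem commute_smul_one_add_smul {m m' : Mat2 R} (h : Commute m m') (a b : R) :
    Commute m (a • 1 + b • m') :=
  ((Commute.one_right m).smul_right a).add_right (h.smul_right b)

theorem eq_smul_one_of_offScalar_eq_zero {m : Mat2 R} (h : offScalar m = 0) : m = m 1 1 • 1 := by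
  rw [← offScalarEquiv.apply_eq_iff_eq]
  simpa [offScalarEquiv, offScalar_apply] using h

theorem eq_of_commute_companion {T D : R} {m : Mat2 R} (h : Commute (companion T D) m) :
    m = m 0 0 • 1 + m 1 0 • companion T D := by
  have h₀₂ := commute_iff.1 h 0 2
  have h₁₂ := commute_iff.1 h 1 2
  simp only [offScalar_apply, companion, of_apply, cons_val] at h₀₂ h₁₂
  ext i j
  fin_cases i <;> fin_cases j <;> simp [companion] <;> grind

theorem companion_ne_smul_one [Nontrivial R] (T D a : R) : companion T D ≠ a • 1 := fun h => by
  simpa [companion] using congrFun₂ h 1 0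

theorem conj_smul_one (P : (Mat2 R)ˣ) (a : R) :
    (P * (a • 1) * (P⁻¹ : (Mat2 R)ˣ) : Mat2 R) = a • 1 := by
  simp

theorem smul_one_map (φ : R →+* S) (a : R) : (a • 1 : Mat2 R).map φ = φ a • 1 := by
  ext i j
  fin_cases i <;> fin_cases j <;> simp

theorem smul_one_add_smul_companion_map (φ : R →+* S) (a b T D : R) :
    (a • 1 + b • companion T D).map φ = φ a • 1 + φ b • companion (φ T) (φ D) := by
  ext i j
  fin_cases i <;> fin_cases j <;> simp [companion]

theorem smul_one_add_smul_companion_inj {a b a' b' T D : R}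
    (h : a • 1 + b • companion T D = a' • 1 + b' • companion T D) : a = a' ∧ b = b' :=
  ⟨by simpa [companion] using congrFun₂ h 0 0, by simpa [companion] using congrFun₂ h 1 0⟩

theorem eq_of_companion_eq_conj {P : (Mat2 R)ˣ} {T D T' D' : R}
    (h : companion T' D' = P * companion T D * (P⁻¹ : (Mat2 R)ˣ)) : T = T' ∧ D = D' := by
  constructor
  · rw [← trace_companion T D, ← trace_companion T' D', h, trace_units_conj]
  · rw [← det_companion T D, ← det_companion T' D', h, det_units_conj]

theorem exists_simConj_commute_companion [IsLocalRing R] {ι : Type*} {x : ι → Mat2 R} {C : Mat2 R}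
    (hC : IsUnit C.discr) (hx : ∀ i, Commute C (x i)) :
    ∃ y, SimConj x y ∧ ∀ i, Commute (companion C.trace C.det) (y i) := by
  obtain ⟨j, hj⟩ := exists_isUnit_offScalar hC
  obtain ⟨P, hP⟩ := exists_conj_eq_companion hj
  exact ⟨_, ⟨P, fun _ => rfl⟩, fun i => hP ▸ commute_units_conj (hx i) P⟩

end CommRing

section Field

variable {F : Type*} [Field F]

theorem discr_ne_zero_of_commute {C m : Mat2 F} (hC : C.discr ≠ 0) (hm : Commute C m)
    (m_ne_zero : offScalar m ≠ 0) : m.discr ≠ 0 := by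
  obtain ⟨j, hj⟩ := exists_isUnit_offScalar hC.isUnit
  obtain ⟨v, hv⟩ : ∃ v, offScalar m = v • offScalar C := by
    refine ⟨offScalar m j / offScalar C j, funext fun l => ?_⟩
    have := hj.ne_zero
    simp only [Pi.smul_apply, smul_eq_mul]
    field_simp
    linear_combination commute_iff.1 hm j l
  have v_ne_zero : v ≠ 0 := by
    rintro rfl
    exact m_ne_zero (by rw [hv, zero_smul])
  rw [discr_eq_sq_mul hv]
  exact mul_ne_zero (pow_ne_zero 2 v_ne_zero) hC

theorem exists_simConj_diagonal_of_splits {ι : Type*} {C : Mat2 F}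
    (hC : C.discr ≠ 0) (splits : C.charpoly.Splits) {z : ι → Mat2 F}
    (hz : ∀ i, Commute C (z i)) : ∃ d : ι → Fin 2 → F, SimConj z fun i => diagonal (d i) := by
  obtain ⟨r, hr⟩ := splits.exists_eval_eq_zero (by simp [charpoly_degree_eq_dim])
  replace hr : r ^ 2 - C.trace * r + C.det = 0 := by simpa [charpoly_fin_two] using hr
  obtain ⟨y, hzy, hy⟩ := exists_simConj_commute_companion hC.isUnit hz
  -- The rows are left eigenvectors of the companion matrix.
  let Q : Mat2 F := !![1, r; 1, C.trace - r]
  have Q_isUnit : IsUnit Q := by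
    refine (isUnit_iff_isUnit_det _).2 (isUnit_iff_ne_zero.2 fun h => hC ?_)
    rw [discr_fin_two]
    simp only [Q, det_fin_two, of_apply, cons_val] at h
    linear_combination -4 * hr + (C.trace - 2 * r) * h
  obtain ⟨P, hP⟩ := Q_isUnit
  refine ⟨fun i a => (y i) 0 0 + y i 1 0 * ![r, C.trace - r] a, hzy.trans ⟨P, fun i => ?_⟩⟩
  rw [Units.eq_mul_inv_iff_mul_eq, hP, eq_of_commute_companion (hy i)]
  ext a b
  fin_cases a <;> fin_cases b <;> simp [companion, mul_apply, Fin.sum_univ_two, Q] <;> grind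

end Field

end Mat2

/-! ### Conjugating a commuting separable matrix into the base field -/

theorem exists_discr_eq_one_commute_of_simDiagonalizable {R : Type} [CommRing R] {g : ℕ}
    {x : Fin g → Mat2 R} (hx : SimDiagonalizable x) :
    ∃ E : Mat2 R, E.discr = 1 ∧ ∀ i, Commute E (x i) := by
  obtain ⟨d, hd⟩ := simDiagonalizable_iff.1 hx
  obtain ⟨P, hP⟩ := hd.symm
  refine ⟨P * (diagonal ![1, 0] : Mat2 R) * (P⁻¹ : (Mat2 R)ˣ), ?_, fun i => ?_⟩
  · rw [Mat2.discr_units_conj]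
    simp [Mat2.discr_eq_offScalar, Mat2.offScalar_apply]
  · rw [hP]
    exact commute_units_conj (commute_diagonal _ _) P

theorem Mat2.commute_of_offScalar_eq_smul {R : Type*} [CommRing R] {E C m m' : Mat2 R} {a : R}
    {v : Fin 3 → R} {j : Fin 3} (hj : IsUnit (offScalar E j)) (hEm : Commute E m)
    (hEm' : Commute E m') (hm : offScalar m = a • offScalar C) (hm' : offScalar m' = a • v) :
    Commute C m' := by
  rw [commute_iff] at hEm hEm' ⊢
  simp only [hm, hm', Pi.smul_apply, smul_eq_mul] at hEm hEm' ⊢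
  intro i k
  refine (hj.mul hj).mul_left_cancel ?_
  linear_combination offScalar E j * v k * hEm j i - offScalar E j * v i * hEm j k +
    offScalar E i * offScalar C j * hEm' j k - offScalar E k * offScalar C j * hEm' j i

namespace TruncRing

open Mat2

section Commutant

variable {F K : Type} [Field F] [Field K] {α : ℕ} [NeZero α]

theorem isUnit_discr_of_commute {E m C : Mat2 (TruncRing F α)} {k : ℕ} {j : Fin 3}
    (hE : IsUnit E.discr) (hEm : Commute E m) (hk : k < α)
    (hm : offScalar m = tvar F α ^ k • offScalar C) (hj : IsUnit (offScalar C j)) :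
    IsUnit C.discr := by
  have residue_commute : Commute (E.map (residue F α)) (C.map (residue F α)) := by
    refine commute_iff.2 fun i l => ?_
    have annihilates : tvar F α ^ k *
        (offScalar E i * offScalar C l - offScalar E l * offScalar C i) = 0 := by
      have := commute_iff.1 hEm i l
      simp only [hm, Pi.smul_apply, smul_eq_mul] at this
      linear_combination this
    rw [tvar_pow_mul_eq_zero_iff hk.le] at annihilates
    simp only [offScalar_map, Function.comp_apply]
    rw [← sub_eq_zero, ← map_mul, ← map_mul, ← map_sub, residue_eq_zero_iff]
    exact (dvd_pow_self _ (by omega)).trans annihilates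
  rw [← isUnit_map_iff (residue F α), isUnit_iff_ne_zero] at hE hj ⊢
  rw [← discr_map] at hE ⊢
  refine discr_ne_zero_of_commute hE residue_commute fun h => hj ?_
  simpa [offScalar_map] using congrFun h j

instance isLocalHom_truncMap (φ : F →+* K) : IsLocalHom (truncMap φ α) where
  map_nonunit r hr := by
    have := hr.map (residue K α)
    rwa [residue_truncMap, isUnit_map_iff φ, isUnit_map_iff (residue F α)] at this

theorem exists_commute_of_simDiagonalizable_map (φ : F →+* K) {g : ℕ}
    {x : Fin g → Mat2 (TruncRing F α)} (hx : SimDiagonalizable fun i => (x i).map (truncMap φ α)) :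
    ∃ C : Mat2 (TruncRing F α), IsUnit C.discr ∧ ∀ i, Commute C (x i) := by
  by_cases scalar : ∀ i, offScalar (x i) = 0
  · refine ⟨!![1, 0; 0, 0], ?_, fun i => commute_iff.2 (by simp [scalar i])⟩
    simp [discr_eq_offScalar, offScalar_apply]
  obtain ⟨i₁, hi₁⟩ := not_forall.1 scalar
  obtain ⟨k, hk, v, hv, ⟨i₀, j⟩, hj⟩ :=
    have : Nonempty (Fin g × Fin 3) := ⟨(i₁, 0)⟩
    exists_eq_tvar_pow_smul fun p : Fin g × Fin 3 => offScalar (x p.1) p.2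
  have k_ne_α : k ≠ α := by
    rintro rfl
    exact hi₁ (funext fun j => by simpa [tvar_pow_self] using congrFun hv (i₁, j))
  let C : Mat2 (TruncRing F α) := offScalarEquiv.symm (fun j => v (i₀, j), 0)
  have offScalar_C : offScalar C = fun j => v (i₀, j) :=
    congrArg Prod.fst (offScalarEquiv.apply_symm_apply (_, 0))
  have offScalar_x (i : Fin g) : offScalar ((x i).map (truncMap φ α)) =
      tvar K α ^ k • fun j => truncMap φ α (v (i, j)) := by
    rw [offScalar_map]
    funext j
    simpa using congrArg (truncMap φ α) (congrFun hv (i, j))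
  have offScalar_x₀ : offScalar ((x i₀).map (truncMap φ α)) =
      tvar K α ^ k • offScalar (C.map (truncMap φ α)) := by
    rw [offScalar_x, offScalar_map, offScalar_C]
    rfl
  obtain ⟨E, hE, hEx⟩ := exists_discr_eq_one_commute_of_simDiagonalizable hx
  replace hE : IsUnit E.discr := hE ▸ isUnit_one
  obtain ⟨l, hl⟩ := exists_isUnit_offScalar hE
  refine ⟨C, ?_, fun i => ?_⟩
  · rw [← isUnit_map_iff (truncMap φ α), ← discr_map]
    refine isUnit_discr_of_commute hE (hEx i₀) (lt_of_le_of_ne hk k_ne_α) offScalar_x₀ (j := j) ?_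
    rw [offScalar_map, offScalar_C]
    exact hj.map (truncMap φ α)
  · exact Commute.of_map (f := (truncMap φ α).mapMatrix)
      (Matrix.map_injective (truncMap_injective φ))
      (commute_of_offScalar_eq_smul hl (hEx i₀) (hEx i) offScalar_x₀ (offScalar_x i))

end Commutant

section Frobenius

variable {F : Type} [Field F] [Finite F] {α : ℕ} [NeZero α]

variable (F α) in
theorem exists_prime_charP_card_eq_pow :
    ∃ p n : ℕ, p.Prime ∧ CharP (TruncRing F α) p ∧ Nat.card F = p ^ n := by
  have := Fintype.ofFinite F
  obtain ⟨p, _, n, hp, card_eq⟩ := FiniteField.card' F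
  exact ⟨p, n, hp, charP_of_injective_algebraMap (algebraMap F _).injective p,
    Nat.card_eq_fintype_card.trans card_eq⟩

theorem pow_card_pow (r : TruncRing F α) :
    r ^ Nat.card F ^ α = algebraMap F _ (residue F α r) := by
  have := Fintype.ofFinite F
  obtain ⟨p, n, hp, _, card_eq⟩ := exists_prime_charP_card_eq_pow F α
  have : Fact p.Prime := ⟨hp⟩
  obtain ⟨c, hc⟩ : tvar F α ∣ r - algebraMap F _ (residue F α r) :=
    residue_eq_zero_iff.1 (by rw [map_sub, residue_algebraMap, sub_self])
  have nilpotent_pow : (tvar F α * c) ^ Nat.card F ^ α = 0 := by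
    rw [mul_pow, ← Nat.add_sub_of_le (Nat.lt_pow_self Finite.one_lt_card).le, pow_add,
      tvar_pow_self, zero_mul, zero_mul]
  calc r ^ Nat.card F ^ α
      = (tvar F α * c + algebraMap F _ (residue F α r)) ^ Nat.card F ^ α := by
        rw [← hc, sub_add_cancel]
    _ = algebraMap F _ (residue F α r ^ Nat.card F ^ α) := by
        rw [map_pow, card_eq, ← pow_mul, add_pow_char_pow, pow_mul, ← card_eq, nilpotent_pow,
          zero_add]
    _ = algebraMap F _ (residue F α r) := by
        rw [Nat.card_eq_fintype_card, FiniteField.pow_card_pow]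

theorem trace_pow_card_pow (m : Mat2 (TruncRing F α)) :
    (m ^ Nat.card F ^ α).trace = algebraMap F _ (residue F α m.trace) := by
  obtain ⟨p, n, hp, _, card_eq⟩ := exists_prime_charP_card_eq_pow F α
  have : Fact p.Prime := ⟨hp⟩
  rw [← pow_card_pow, card_eq, ← pow_mul, trace_pow_char_pow]

theorem exists_simConj_commute_map {ι : Type*} {x : ι → Mat2 (TruncRing F α)}
    {C : Mat2 (TruncRing F α)} (hC : IsUnit C.discr) (hx : ∀ i, Commute C (x i)) :
    ∃ C₀ : Mat2 F, C₀.discr ≠ 0 ∧ ∃ y, SimConj x y ∧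
      ∀ i, Commute (C₀.map (algebraMap F (TruncRing F α))) (y i) := by
  let T : F := residue F α C.trace
  let D : F := residue F α C.det
  have trace_pow : (C ^ Nat.card F ^ α).trace = algebraMap F _ T := trace_pow_card_pow C
  have det_pow : (C ^ Nat.card F ^ α).det = algebraMap F _ D := by rw [Matrix.det_pow, pow_card_pow]
  have discr_ne_zero : (companion T D).discr ≠ 0 := by
    have := (hC.map (residue F α)).ne_zero
    rwa [discr_fin_two, map_sub, map_mul, map_pow, map_ofNat, ← discr_companion] at this
  have discr_pow : (C ^ Nat.card F ^ α).discr = algebraMap F _ (companion T D).discr := by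
    rw [discr_fin_two, trace_pow, det_pow, discr_companion, map_sub, map_mul, map_pow, map_ofNat]
  obtain ⟨y, hxy, hy⟩ := exists_simConj_commute_companion
    (discr_pow ▸ discr_ne_zero.isUnit.map (algebraMap F _)) fun i => (hx i).pow_left _
  refine ⟨companion T D, discr_ne_zero, y, hxy, fun i => ?_⟩
  rw [companion_map, ← trace_pow, ← det_pow]
  exact hy i

end Frobenius

end TruncRing

/-! ### Normal forms over a field -/

namespace Mat2

/-- Representatives of the conjugacy classes of `n`-tuples over `F` which become simultaneously
diagonalizable over an extension of `F`: scalar matrices, followed (unless all matrices are scalar)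
by the companion matrix of `X² - T X + D` and elements `a + b X` of `F[X] / (X² - T X + D)`. -/
inductive NormalForm (F : Type*) [Field F] : ℕ → Type _
  | nil : NormalForm F 0
  | scalar {n : ℕ} (a : F) (w : NormalForm F n) : NormalForm F (n + 1)
  | separable {n : ℕ} (T D : F) (h : T ^ 2 - 4 * D ≠ 0) (c : Fin n → F × F) : NormalForm F (n + 1)

namespace NormalForm

variable {F : Type*} [Field F] {n : ℕ}

/-- The tuple of matrices encoded by a normal form. -/
def realize : {n : ℕ} → NormalForm F n → Fin n → Mat2 F
  | _, nil => Fin.elim0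
  | _, scalar a w => Fin.cons (a • 1) w.realize
  | _, separable T D _ c =>
    Fin.cons (companion T D) fun i => (c i).1 • 1 + (c i).2 • companion T D

section Card

/-- The recursive description of `NormalForm F (n + 1)` as a disjoint union. -/
def equivSum : NormalForm F (n + 1) ≃
    F × NormalForm F n ⊕ {p : F × F // p.1 ^ 2 - 4 * p.2 ≠ 0} × (Fin n → F × F) where
  toFun
    | scalar a w => .inl (a, w)
    | separable T D h c => .inr (⟨(T, D), h⟩, c)
  invFun
    | .inl (a, w) => scalar a w
    | .inr (p, c) => separable p.1.1 p.1.2 p.2 c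
  left_inv
    | scalar _ _ => rfl
    | separable _ _ _ _ => rfl
  right_inv
    | .inl _ => rfl
    | .inr _ => rfl

instance : Unique (NormalForm F 0) where
  default := nil
  uniq
    | nil => rfl

variable [Finite F]

instance : Finite (NormalForm F n) := by
  induction n with
  | zero => infer_instance
  | succ n _ => exact Finite.of_equiv _ equivSum.symm

theorem card_discr_eq_zero : Nat.card {p : F × F // p.1 ^ 2 - 4 * p.2 = 0} = Nat.card F := by
  -- These are the coefficients of the squares `(X - r)²`.
  let ofRoot (r : F) : {p : F × F // p.1 ^ 2 - 4 * p.2 = 0} := ⟨(2 * r, r ^ 2), by ring⟩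
  refine (Nat.card_eq_of_bijective ofRoot ⟨fun r s h => ?_, ?_⟩).symm
  · obtain ⟨two_mul_eq, sq_eq⟩ := Prod.ext_iff.1 (Subtype.ext_iff.1 h)
    refine sub_eq_zero.1 (pow_eq_zero_iff two_ne_zero |>.1 ?_)
    linear_combination r * two_mul_eq - sq_eq
  · rintro ⟨⟨T, D⟩, h⟩
    by_cases two : (2 : F) = 0
    · have charTwo := CharTwo.of_one_ne_zero_of_two_eq_zero one_ne_zero two
      obtain ⟨r, rfl⟩ := FiniteField.isSquare_of_char_two (ringChar.eq_iff.2 charTwo) D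
      have T_eq_zero : T = 0 := by
        refine (pow_eq_zero_iff two_ne_zero).1 ?_
        linear_combination (exp := 1) h + 2 * r * r * two
      exact ⟨r, Subtype.ext (Prod.ext (by simp [ofRoot, two, T_eq_zero]) (sq r))⟩
    · refine ⟨T / 2, Subtype.ext (Prod.ext (mul_div_cancel₀ T two) ?_)⟩
      change (T / 2) ^ 2 = D
      field_simp
      linear_combination h

theorem card_discr_ne_zero_add_card :
    Nat.card {p : F × F // p.1 ^ 2 - 4 * p.2 ≠ 0} + Nat.card F = Nat.card F ^ 2 := by
  classical
  rw [sq, ← Nat.card_prod, ← Nat.card_congr (Equiv.sumCompl fun p : F × F => p.1 ^ 2 - 4 * p.2 = 0),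
    Nat.card_sum, card_discr_eq_zero, add_comm]

theorem card_eq : Nat.card (NormalForm F n) = Nat.card F ^ (2 * n) := by
  induction n with
  | zero => simp
  | succ n ih =>
    rw [Nat.card_congr equivSum, Nat.card_sum, Nat.card_prod, Nat.card_prod, ih, Nat.card_fun,
      Nat.card_prod, Nat.card_fin, ← sq, ← pow_mul, ← add_mul, add_comm,
      card_discr_ne_zero_add_card, ← pow_add]
    ring

end Card

theorem exists_simConj_realize {C : Mat2 F} (hC : C.discr ≠ 0) {z : Fin n → Mat2 F}
    (hz : ∀ i, Commute C (z i)) : ∃ w : NormalForm F n, SimConj z w.realize := by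
  induction n with
  | zero => exact ⟨nil, 1, fun i => i.elim0⟩
  | succ n ih =>
    by_cases scalar₀ : offScalar (z 0) = 0
    · obtain ⟨w, P, hP⟩ := ih (z := Fin.tail z) fun i => hz i.succ
      refine ⟨scalar (z 0 1 1) w, P, Fin.cases ?_ hP⟩
      rw [eq_smul_one_of_offScalar_eq_zero scalar₀]
      simp [realize]
    · have discr_ne_zero := discr_ne_zero_of_commute hC (hz 0) scalar₀
      obtain ⟨j, hj⟩ := exists_isUnit_offScalar hC.isUnit
      obtain ⟨j₀, hj₀⟩ := exists_isUnit_offScalar discr_ne_zero.isUnit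
      obtain ⟨P, hP⟩ := exists_conj_eq_companion hj₀
      let y (i : Fin n) : Mat2 F := P * z i.succ * (P⁻¹ : (Mat2 F)ˣ)
      have hy (i : Fin n) : Commute (companion (z 0).trace (z 0).det) (y i) :=
        hP ▸ commute_units_conj (commute_of_commute hj (hz 0) (hz i.succ)) P
      rw [discr_fin_two] at discr_ne_zero
      exact ⟨separable _ _ discr_ne_zero fun i => (y i 0 0, y i 1 0), P,
        Fin.cases hP.symm fun i => (eq_of_commute_companion (hy i)).symm⟩

theorem exists_commute_realize (w : NormalForm F n) :
    ∃ C : Mat2 F, C.discr ≠ 0 ∧ ∀ i, Commute C (w.realize i) := by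
  induction w with
  | nil => exact ⟨companion 1 0, by simp [discr_companion], fun i => i.elim0⟩
  | scalar a w ih =>
    obtain ⟨C, hC, hw⟩ := ih
    exact ⟨C, hC, Fin.cases ((Commute.one_right C).smul_right a) hw⟩
  | separable T D h c =>
    exact ⟨companion T D, by rwa [discr_companion],
      Fin.forall_fin_succ.2 ⟨Commute.refl _, fun i => commute_smul_one_add_smul rfl _ _⟩⟩

section Injective

variable {K : Type*} [Field K] (φ : F →+* K)

theorem eq_of_separable_simConj {T D T' D' : F} {hTD : T ^ 2 - 4 * D ≠ 0}
    {hTD' : T' ^ 2 - 4 * D' ≠ 0} {c c' : Fin n → F × F}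
    (h : SimConj (fun i => ((separable T D hTD c).realize i).map φ)
      (fun i => ((separable T' D' hTD' c').realize i).map φ)) :
    separable T D hTD c = separable T' D' hTD' c' := by
  obtain ⟨P, hP⟩ := h
  have head := hP 0
  simp only [realize, Fin.cons_zero, companion_map] at head
  obtain ⟨hT, hD⟩ := eq_of_companion_eq_conj head
  obtain rfl := φ.injective hT
  obtain rfl := φ.injective hD
  have P_commute : Commute (P : Mat2 K) (companion (φ T) (φ D)) :=
    ((Units.eq_mul_inv_iff_mul_eq P).1 head).symm
  congr 1
  funext i
  have tail := hP i.succ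
  simp only [realize, Fin.cons_succ, smul_one_add_smul_companion_map] at tail
  rw [commute_smul_one_add_smul P_commute, Units.mul_inv_cancel_right] at tail
  obtain ⟨fst_eq, snd_eq⟩ := smul_one_add_smul_companion_inj tail.symm
  exact Prod.ext (φ.injective fst_eq) (φ.injective snd_eq)

theorem not_simConj_scalar_separable {a T D : F} {w : NormalForm F n} {hTD : T ^ 2 - 4 * D ≠ 0}
    {c : Fin n → F × F} :
    ¬SimConj (fun i => ((scalar a w).realize i).map φ)
      (fun i => ((separable T D hTD c).realize i).map φ) := by
  rintro ⟨P, hP⟩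
  have head := hP 0
  simp only [realize, Fin.cons_zero, smul_one_map, conj_smul_one, companion_map] at head
  exact companion_ne_smul_one _ _ _ head

theorem eq_of_simConj {w w' : NormalForm F n}
    (h : SimConj (fun i => (w.realize i).map φ) (fun i => (w'.realize i).map φ)) : w = w' := by
  induction w with
  | nil => exact Subsingleton.elim _ _
  | scalar a w ih =>
    cases w' with
    | scalar a' w' =>
      obtain ⟨P, hP⟩ := h
      have head := hP 0
      simp only [realize, Fin.cons_zero, smul_one_map, conj_smul_one] at head
      have a_eq : a = a' := φ.injective (by simpa using (congrFun₂ head 0 0).symm)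
      rw [a_eq, ih ⟨P, fun i => hP i.succ⟩]
    | separable T D hTD c => exact absurd h (not_simConj_scalar_separable φ)
  | separable T D hTD c =>
    cases w' with
    | scalar a' w' => exact absurd h.symm (not_simConj_scalar_separable φ)
    | separable T' D' hTD' c' => exact eq_of_separable_simConj φ h

end Injective

end NormalForm

end Mat2

/-! ### Assembling tuples from their coefficients -/

theorem commute_map_linearMap {R A n : Type*} [CommRing R] [CommRing A] [Algebra R A] [Fintype n]
    (ψ : A →ₗ[R] R) {C : Matrix n n R} {m : Matrix n n A}
    (h : Commute (C.map (algebraMap R A)) m) : Commute C (m.map ψ) := by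
  ext a b
  simpa only [mul_apply, Matrix.map_apply, mul_comm (m a _), ← Algebra.smul_def, map_sum, map_smul,
    smul_eq_mul, mul_comm (C _ b)] using congrArg ψ (congrFun₂ h a b)

theorem Mat2.exists_simConj_diagonal_map {F K : Type*} [Field F] [Field K] (φ : F →+* K)
    {ι : Type*} {C : Mat2 F} (hC : C.discr ≠ 0) (splits : (C.charpoly.map φ).Splits)
    {z : ι → Mat2 F} (hz : ∀ i, Commute C (z i)) :
    ∃ d : ι → Fin 2 → K, SimConj (fun i => (z i).map φ) fun i => diagonal (d i) :=
  exists_simConj_diagonal_of_splits (C := C.map φ) (by rwa [discr_map, _root_.map_ne_zero])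
    (by rwa [charpoly_map]) fun i => (hz i).map φ.mapMatrix

namespace TruncRing

open Mat2

section Assemble

variable {F K : Type} [Field F] [Field K] {α : ℕ} {ι : Type*}

/-- The tuple of matrices over `F[t]/(t^α)` whose coefficient of `t^k` in position `i` is the
matrix `z (k, i)`. -/
noncomputable def assemble (z : Fin α × ι → Mat2 F) (i : ι) : Mat2 (TruncRing F α) :=
  ∑ k : Fin α, tvar F α ^ (k : ℕ) • (algebraMap F (TruncRing F α)).mapMatrix (z (k, i))

theorem assemble_apply (z : Fin α × ι → Mat2 F) (i : ι) (a b : Fin 2) :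
    assemble z i a b = (basis F α).equivFun.symm fun k => z (k, i) a b := by
  simp [assemble, Matrix.sum_apply, Module.Basis.equivFun_symm_apply, smul_basis, mul_comm]

theorem assemble_coord (y : ι → Mat2 (TruncRing F α)) :
    assemble (fun p => (y p.2).map ((basis F α).coord p.1)) = y := by
  funext i
  ext a b
  rw [assemble_apply]
  exact (basis F α).equivFun.symm_apply_apply (y i a b)

theorem assemble_map (φ : F →+* K) (z : Fin α × ι → Mat2 F) :
    assemble (fun p => (z p).map φ) = fun i => (assemble z i).map (truncMap φ α) := by
  funext i
  ext a b
  simp [assemble, Matrix.sum_apply, truncMap_tvar, truncMap_algebraMap]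

theorem assemble_diagonal (d : Fin α × ι → Fin 2 → F) :
    assemble (fun p => diagonal (d p)) =
      fun i => diagonal fun a => (basis F α).equivFun.symm fun k => d (k, i) a := by
  funext i
  ext a b
  rw [assemble_apply]
  obtain rfl | hab := eq_or_ne a b
  · simp only [diagonal_apply_eq]
  · simp only [diagonal_apply_ne _ hab]
    exact map_zero _

theorem simConj_assemble {z z' : Fin α × ι → Mat2 F} (h : SimConj z z') :
    SimConj (assemble z) (assemble z') :=
  (h.map (algebraMap F (TruncRing F α)).mapMatrix.toMonoidHom).sum_smul fun k =>
    tvar F α ^ (k : ℕ)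

theorem simConj_of_simConj_assemble_diagonal [NeZero α] {d d' : Fin α × ι → Fin 2 → F}
    (h : SimConj (assemble fun p => diagonal (d p)) (assemble fun p => diagonal (d' p))) :
    SimConj (fun p => diagonal (d p)) fun p => diagonal (d' p) := by
  rw [assemble_diagonal, assemble_diagonal] at h
  obtain ⟨σ, hσ⟩ := SimConj.exists_perm_of_diagonal h
  have d_eq : d = fun p => d' p ∘ σ := by
    funext ⟨k, i⟩ a
    exact (congrFun ((basis F α).equivFun.symm.injective (congrFun (hσ i) a)) k).symm
  rw [d_eq]
  exact (SimConj.diagonal_comp_perm d' σ).symm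

end Assemble

section NormalForm

variable {F : Type} [Field F] {α g : ℕ}

/-- A normal form of length `α * g`, read as a `g`-tuple of matrices over `F[t]/(t^α)`. -/
noncomputable def ofNormalForm (w : NormalForm F (α * g)) : Fin g → Mat2 (TruncRing F α) :=
  assemble (w.realize ∘ finProdFinEquiv)

theorem not_absIndecTwo_ofNormalForm (w : NormalForm F (α * g)) :
    ¬AbsIndecTwo F α g (ofNormalForm w) := by
  obtain ⟨C, hC, hw⟩ := w.exists_commute_realize
  let K := C.charpoly.SplittingField
  obtain ⟨d, hd⟩ := exists_simConj_diagonal_map (algebraMap F K) hC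
    (SplittingField.splits C.charpoly) (z := w.realize ∘ finProdFinEquiv) fun _ => hw _
  have assembled := simConj_assemble hd
  rw [assemble_map, assemble_diagonal] at assembled
  exact fun h => h K (simDiagonalizable_iff.2 ⟨_, assembled⟩)

theorem eq_of_simConj_ofNormalForm [NeZero α] {w w' : NormalForm F (α * g)}
    (h : SimConj (ofNormalForm w : Fin g → Mat2 (TruncRing F α)) (ofNormalForm w')) : w = w' := by
  let φ := algebraMap F (AlgebraicClosure F)
  have diagonalize (w : NormalForm F (α * g)) : ∃ d : Fin α × Fin g → Fin 2 → AlgebraicClosure F,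
      SimConj (fun p => (w.realize (finProdFinEquiv p)).map φ) fun p => diagonal (d p) := by
    obtain ⟨C, hC, hw⟩ := w.exists_commute_realize
    exact exists_simConj_diagonal_map φ hC (IsAlgClosed.splits _) fun _ => hw _
  obtain ⟨d, hd⟩ := diagonalize w
  obtain ⟨d', hd'⟩ := diagonalize w'
  replace h := h.map (truncMap φ α).mapMatrix.toMonoidHom
  have assembled : SimConj (assemble fun p => (w.realize (finProdFinEquiv p)).map φ)
      (assemble fun p => (w'.realize (finProdFinEquiv p)).map φ) := by
    rw [assemble_map, assemble_map]
    exact h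
  have diagonal_simConj := simConj_of_simConj_assemble_diagonal
    (((simConj_assemble hd).symm.trans assembled).trans (simConj_assemble hd'))
  refine NormalForm.eq_of_simConj φ ?_
  simpa only [Function.comp_def, Equiv.apply_symm_apply] using
    ((hd.trans diagonal_simConj).trans hd'.symm).comp finProdFinEquiv.symm

theorem exists_simConj_ofNormalForm [Finite F] [NeZero α] {x : Fin g → Mat2 (TruncRing F α)}
    (hx : ¬AbsIndecTwo F α g x) :
    ∃ w : NormalForm F (α * g), SimConj x (ofNormalForm w) := by
  simp only [AbsIndecTwo, not_forall, not_not] at hx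
  obtain ⟨K, _, _, _, hK⟩ := hx
  obtain ⟨C, hC, hxC⟩ := exists_commute_of_simDiagonalizable_map _ hK
  obtain ⟨C₀, hC₀, y, hxy, hy⟩ := exists_simConj_commute_map hC hxC
  obtain ⟨w, hw⟩ := NormalForm.exists_simConj_realize hC₀
    (z := (fun p => (y p.2).map ((basis F α).coord p.1)) ∘ finProdFinEquiv.symm)
    fun _ => commute_map_linearMap _ (hy _)
  refine ⟨w, hxy.trans ?_⟩
  have := simConj_assemble (hw.comp finProdFinEquiv)
  rwa [Function.comp_assoc, Equiv.symm_comp_self, Function.comp_id, assemble_coord] at this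

end NormalForm

end TruncRing

theorem AbsIndecTwo.of_simConj {F : Type} [Field F] {α g : ℕ} {x y : Fin g → Mat2 (TruncRing F α)}
    (hxy : SimConj x y) (hx : AbsIndecTwo F α g x) : AbsIndecTwo F α g y := by
  intro K _ _ _ hy
  rw [simDiagonalizable_iff] at hy
  obtain ⟨d, hd⟩ := hy
  exact hx K (simDiagonalizable_iff.2
    ⟨d, (hxy.map (truncMap (algebraMap F K) α).mapMatrix.toMonoidHom).trans hd⟩)

theorem AbsIndecTwo.card_quot_simConj_add {F : Type} [Field F] [Finite F] {α : ℕ} [NeZero α]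
    (g : ℕ) :
    Nat.card (Quot fun x y : {x // AbsIndecTwo F α g x} => SimConj x.1 y.1) +
        Nat.card F ^ (2 * (α * g)) =
      Nat.card (Quot (SimConj : (Fin g → Mat2 (TruncRing F α)) → _ → Prop)) := by
  rw [← Mat2.NormalForm.card_eq (F := F)]
  exact card_quot_subtype_add_card (SimConj.equivalence _ _) of_simConj
    TruncRing.not_absIndecTwo_ofNormalForm TruncRing.eq_of_simConj_ofNormalForm
    TruncRing.exists_simConj_ofNormalForm

/-- Let `g ≥ 1`, `α ≥ 1` and `𝔽_q` a finite field; `R := 𝔽_q[t]/(t^α)`.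
The number of `GL₂(R)`-simultaneous-conjugacy classes of absolutely indecomposable
tuples `x ∈ M₂(R)^g` equals
`q^{2αg−1}·(q^{2g}−1)·(q^{α(2g−3)}−1) / ((q²−1)·(q^{2g−3}−1))`. -/
theorem gloop_rank_two_kac_count (g α : ℕ) (hg : 1 ≤ g) (hα : 1 ≤ α)
    (F : Type) [Field F] [Fintype F] :
    (Nat.card (Quot (fun x y :
        {x : Fin g → Matrix (Fin 2) (Fin 2) (TruncRing F α) // AbsIndecTwo F α g x} =>
      ∃ P : (Matrix (Fin 2) (Fin 2) (TruncRing F α))ˣ, ∀ i : Fin g,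
        y.1 i = (P : Matrix (Fin 2) (Fin 2) (TruncRing F α)) * x.1 i *
          ((P⁻¹ : (Matrix (Fin 2) (Fin 2) (TruncRing F α))ˣ) :
            Matrix (Fin 2) (Fin 2) (TruncRing F α)))) : ℚ)
      = (Fintype.card F : ℚ) ^ (2 * (α : ℤ) * (g : ℤ) - 1)
          * ((Fintype.card F : ℚ) ^ (2 * (g : ℤ)) - 1)
          * ((Fintype.card F : ℚ) ^ ((α : ℤ) * (2 * (g : ℤ) - 3)) - 1)
        / (((Fintype.card F : ℚ) ^ (2 : ℤ) - 1)
          * ((Fintype.card F : ℚ) ^ (2 * (g : ℤ) - 3) - 1)) := by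
  have : NeZero α := ⟨by omega⟩
  have card_all := TruncRing.card_quot_simConj (F := F) (α := α) g
  rw [← AbsIndecTwo.card_quot_simConj_add, Nat.cast_add, Nat.cast_pow, add_comm,
    Nat.card_eq_fintype_card (α := F)] at card_all
  exact add_left_cancel card_all
end

section
/- Let g ≥ 2 and α ≥ 1 be integers, 𝔽_q a finite field, and R := 𝔽_q[t]/(t^α). Then the number of pairs (x, y) of g-tuples of 2×2 matrices over R satisfying Σ_{i=1}^{g} (x_i y_i − y_i x_i) = 0 equals ((q^{2g} − 1)·q^{α(8g−3)} − (q³ − 1)·q^{6αg}) / (q³·(q^{2g−3} − 1)). -/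
/-!
Let `R = A/(p^α)` and let `ψ` be a primitive additive character of `R`. Since
`tr (w (xy - yx)) = tr ((wx - xw) y)`, the pairing `(m, w) ↦ ψ (tr (m w))` makes
`y ↦ ∑ [x_i, y_i]` adjoint to `w ↦ ([w, x_i])_i`. Summing over `x`, the zero fibre of the moment map
is counted by the matrices `w` together with `g` matrices commuting with `w`.

Two `2 × 2` matrices commute exactly when their classes modulo scalars, vectors of `R³`, are
proportional. Over `A/(p^(k+1))` a vector with a unit coordinate is proportional only to its own
multiples, and any other vector is `p` times a vector over `A/(p^k)`, whose proportional vectors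
are those whose reduction is proportional to it. This gives a linear recursion in `k`, solved in
closed form.
-/

section FiniteSets

variable {α β κ : Type*}

lemma card_subtype_prod_eq_sum [Fintype α] [Finite β] (r : α → β → Prop) :
    Nat.card {p : α × β // r p.1 p.2} = ∑ a, Nat.card {b // r a b} := by
  rw [Nat.card_congr (Equiv.subtypeProdEquivSigmaSubtype r), Nat.card_sigma]

lemma card_subtype_forall [Finite κ] (P : β → Prop) :
    Nat.card {u : κ → β // ∀ k, P (u k)} = Nat.card {b // P b} ^ Nat.card κ := by
  rw [Nat.card_congr Equiv.subtypePiEquivPi, Nat.card_fun]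

end FiniteSets

section AdditiveGroups

variable {G H : Type*} [AddCommGroup G] [AddCommGroup H]

lemma card_subtype_comp_of_surjective {f : G →+ H} (hf : Function.Surjective f) (P : H → Prop) :
    Nat.card {x // P (f x)} = Nat.card f.ker * Nat.card {y // P y} := by
  let e : {x // P (f x)} ≃ {y // P y} × f.ker :=
    (Equiv.sigmaSubtypeFiberEquivSubtype f fun _ => Iff.rfl).symm.trans
      (Equiv.sigmaEquivProdOfEquiv fun y => AddMonoidHom.fiberEquivKerOfSurjective hf y.1)
  rw [Nat.card_congr e, Nat.card_prod, mul_comm]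

lemma card_ker_compLeft (f : G →+ H) (ι : Type*) [Finite ι] :
    Nat.card (f.compLeft ι).ker = Nat.card f.ker ^ Nat.card ι := by
  rw [← card_subtype_forall]
  exact Nat.card_congr (Equiv.subtypeEquivRight fun _ => funext_iff)

lemma card_ker_mul_card_of_pairing [Finite G] [Finite H] {K : Type*} [CommRing K] [IsDomain K]
    [CharZero K] (β : G →+ AddChar H K) :
    Nat.card β.ker * Nat.card H = Nat.card G * Nat.card {y // ∀ x, β x y = 1} := by
  classical
  cases nonempty_fintype G
  cases nonempty_fintype H
  let βflip (y : H) : AddChar G K := (AddChar.doubleDualEmb y).compAddMonoidHom β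
  have hβflip (y : H) : βflip y = 0 ↔ ∀ x, β x y = 1 := DFunLike.ext_iff
  have hrows : ∑ x, ∑ y, β x y = Nat.card β.ker * Nat.card H := by
    simp_rw [AddChar.sum_eq_ite, ← Finset.sum_filter, Finset.sum_const, nsmul_eq_mul,
      ← Fintype.card_subtype, ← Nat.card_eq_fintype_card]
    rfl
  have hcols : ∑ y, ∑ x, βflip y x = Nat.card G * Nat.card {y // ∀ x, β x y = 1} := by
    simp_rw [AddChar.sum_eq_ite, ← Finset.sum_filter, Finset.sum_const, nsmul_eq_mul, hβflip,
      ← Fintype.card_subtype, ← Nat.card_eq_fintype_card]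
    exact mul_comm _ _
  have h := hrows.symm.trans (Finset.sum_comm.trans hcols)
  exact_mod_cast h

end AdditiveGroups

section Commutators

variable {R n κ K : Type*} [CommRing R] [Fintype n] [CommRing K]

lemma forall_addChar_trace_mul_eq_one_iff {ψ : AddChar R K} (hψ : ψ.IsPrimitive)
    {m : Matrix n n R} : (∀ y, ψ (m * y).trace = 1) ↔ m = 0 := by
  classical
  refine ⟨fun h => ?_, fun h => by simp [h]⟩
  ext i j
  by_contra hij
  refine hψ hij (AddChar.ext _ _ fun r => ?_)
  simpa [AddChar.mulShift_apply, Matrix.trace_mul_single] using h (Matrix.single j i r)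

lemma trace_mul_commutator (w x y : Matrix n n R) :
    (w * (x * y - y * x)).trace = ((w * x - x * w) * y).trace := by
  rw [mul_sub, sub_mul, Matrix.trace_sub, Matrix.trace_sub, ← mul_assoc, ← mul_assoc,
    Matrix.trace_mul_comm (w * y) x, ← mul_assoc]

variable [Fintype κ]

lemma forall_addChar_trace_mul_sum_commutator_eq_one_iff {ψ : AddChar R K} (hψ : ψ.IsPrimitive)
    (w : Matrix n n R) (x : κ → Matrix n n R) :
    (∀ y : κ → Matrix n n R, ψ ((∑ i, (x i * y i - y i * x i)) * w).trace = 1) ↔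
      ∀ i, Commute w (x i) := by
  classical
  have htrace (y : κ → Matrix n n R) : ((∑ i, (x i * y i - y i * x i)) * w).trace
      = ∑ i, ((w * x i - x i * w) * y i).trace := by
    simp_rw [Matrix.trace_mul_comm _ w, Finset.mul_sum, Matrix.trace_sum, trace_mul_commutator]
  simp_rw [htrace]
  refine ⟨fun h i => sub_eq_zero.1 ((forall_addChar_trace_mul_eq_one_iff hψ).1 fun y => ?_),
    fun h y => by simp [fun i => sub_eq_zero.2 (h i).eq]⟩
  have hi := h (Pi.single i y)
  rwa [Finset.sum_eq_single i (fun j _ hj => by simp [Pi.single_eq_of_ne hj]) (by simp),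
    Pi.single_eq_same] at hi

variable [Finite R] [IsDomain K] [CharZero K]

lemma card_sum_commutator_eq_zero_mul_of_fst {ψ : AddChar R K} (hψ : ψ.IsPrimitive)
    (x : κ → Matrix n n R) :
    Nat.card {y : κ → Matrix n n R // ∑ i, (x i * y i - y i * x i) = 0} *
        Nat.card (Matrix n n R)
      = Nat.card (Matrix n n R) ^ Nat.card κ *
        Nat.card {w : Matrix n n R // ∀ i, Commute w (x i)} := by
  have : Finite (Matrix n n R) := inferInstanceAs (Finite (n → n → R))
  let χ (m : Matrix n n R) : AddChar (Matrix n n R) K :=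
    ψ.compAddMonoidHom ((Matrix.traceAddMonoidHom n R).comp (AddMonoidHom.mulLeft m))
  have hχ (m y : Matrix n n R) : χ m y = ψ (m * y).trace := rfl
  let β : (κ → Matrix n n R) →+ AddChar (Matrix n n R) K :=
    AddMonoidHom.mk' (fun y => χ (∑ i, (x i * y i - y i * x i))) fun y z => by
      ext w
      have hadd : ∑ i, (x i * (y + z) i - (y + z) i * x i)
          = ∑ i, (x i * y i - y i * x i) + ∑ i, (x i * z i - z i * x i) := by
        rw [← Finset.sum_add_distrib]
        exact Finset.sum_congr rfl fun i _ => by simp only [Pi.add_apply]; noncomm_ring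
      rw [AddChar.add_apply, hχ, hχ, hχ, hadd, add_mul, Matrix.trace_add,
        AddChar.map_add_eq_mul]
  have hker (y : κ → Matrix n n R) :
      y ∈ β.ker ↔ ∑ i, (x i * y i - y i * x i) = 0 :=
    DFunLike.ext_iff.trans (forall_addChar_trace_mul_eq_one_iff hψ)
  have hflip (w : Matrix n n R) : (∀ y, β y w = 1) ↔ ∀ i, Commute w (x i) :=
    forall_addChar_trace_mul_sum_commutator_eq_one_iff hψ w x
  have h := card_ker_mul_card_of_pairing β
  rwa [Nat.card_congr (Equiv.subtypeEquivRight hker),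
    Nat.card_congr (Equiv.subtypeEquivRight hflip), Nat.card_fun] at h

lemma card_sum_commutator_eq_zero_mul {ψ : AddChar R K} (hψ : ψ.IsPrimitive) :
    Nat.card {xy : (κ → Matrix n n R) × (κ → Matrix n n R) //
        ∑ i, (xy.1 i * xy.2 i - xy.2 i * xy.1 i) = 0} * Nat.card (Matrix n n R)
      = Nat.card (Matrix n n R) ^ Nat.card κ *
        Nat.card {p : Matrix n n R × (κ → Matrix n n R) // ∀ i, Commute p.1 (p.2 i)} := by
  have : Finite (Matrix n n R) := inferInstanceAs (Finite (n → n → R))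
  cases nonempty_fintype (κ → Matrix n n R)
  have hswap : Nat.card {p : Matrix n n R × (κ → Matrix n n R) // ∀ i, Commute p.1 (p.2 i)}
      = Nat.card {p : (κ → Matrix n n R) × Matrix n n R // ∀ i, Commute p.2 (p.1 i)} :=
    Nat.card_congr ((Equiv.prodComm _ _).subtypeEquiv fun _ => Iff.rfl)
  rw [hswap,
    card_subtype_prod_eq_sum fun x y : κ → Matrix n n R => ∑ i, (x i * y i - y i * x i) = 0,
    card_subtype_prod_eq_sum fun (x : κ → Matrix n n R) w => ∀ i, Commute w (x i),
    Finset.sum_mul, Finset.mul_sum]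
  exact Finset.sum_congr rfl fun x _ => card_sum_commutator_eq_zero_mul_of_fst hψ x

end Commutators

/-- Two vectors over a commutative ring are proportional if all the `2 × 2` minors of the matrix
they form vanish. -/
def Proportional {R ι : Type*} [CommRing R] (w u : ι → R) : Prop :=
  ∀ i j, w i * u j = w j * u i

/-- The number of pairs of a vector `w ∈ R^ι` and a family, indexed by `κ`, of vectors
proportional to `w`. Commuting `2 × 2` matrices are counted through it. -/
noncomputable def proportionalCount (R ι κ : Type*) [CommRing R] : ℕ :=
  Nat.card {p : (ι → R) × (κ → ι → R) // ∀ k, Proportional p.1 (p.2 k)}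

section Proportional

variable {R ι : Type*} [CommRing R]

lemma proportionalCount_eq_sum [Fintype (ι → R)] (κ : Type*) [Finite κ] :
    proportionalCount R ι κ
      = ∑ w : ι → R, Nat.card {u : ι → R // Proportional w u} ^ Nat.card κ := by
  simp_rw [← card_subtype_forall]
  exact card_subtype_prod_eq_sum fun (w : ι → R) (u : κ → ι → R) => ∀ k, Proportional w (u k)

lemma proportionalCount_eq_one_of_subsingleton [Subsingleton R] (κ : Type*) :
    proportionalCount R ι κ = 1 :=
  Nat.card_eq_one_iff_unique.2
    ⟨inferInstance, ⟨⟨0, fun _ _ _ => Subsingleton.elim _ _⟩⟩⟩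

lemma card_proportional_of_isUnit {w : ι → R} {i : ι} (hi : IsUnit (w i)) :
    Nat.card {u : ι → R // Proportional w u} = Nat.card R := by
  let multiple (s : R) : {u : ι → R // Proportional w u} :=
    ⟨s • w, fun j k => by simp only [Pi.smul_apply, smul_eq_mul]; ring⟩
  refine (Nat.card_congr (Equiv.ofBijective multiple ⟨fun s s' h => ?_, fun u => ?_⟩)).symm
  · exact hi.mul_left_injective (congrFun (congrArg Subtype.val h) i)
  · obtain ⟨v, hv⟩ := hi.exists_left_inv
    refine ⟨v * u.1 i, Subtype.ext (funext fun j => ?_)⟩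
    simp only [multiple, Pi.smul_apply, smul_eq_mul]
    linear_combination (-v) * u.2 i j + u.1 j * hv

lemma exists_equiv_matrix_commute_iff_proportional (R : Type*) [CommRing R] :
    ∃ e : R × (Fin 3 → R) ≃ Matrix (Fin 2) (Fin 2) R,
      ∀ p r, Commute (e p) (e r) ↔ Proportional p.2 r.2 := by
  refine ⟨
    { toFun := fun p => !![p.1 + p.2 0, p.2 1; p.2 2, p.1]
      invFun := fun x => (x 1 1, ![x 0 0 - x 1 1, x 0 1, x 1 0])
      left_inv := fun p => Prod.ext rfl (funext fun i => by fin_cases i <;> simp)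
      right_inv := fun x => by ext i j; fin_cases i <;> fin_cases j <;> simp },
    fun p r => ?_⟩
  simp only [Equiv.coe_fn_mk, commute_iff_eq, Matrix.mul_fin_two, Proportional,
    Fin.forall_fin_succ, ← Matrix.ext_iff]
  simp only [Matrix.of_apply, Matrix.cons_val', Matrix.cons_val_zero, Matrix.cons_val_fin_one,
    Fin.succ_zero_eq_one, Matrix.cons_val_one, IsEmpty.forall_iff, and_true, Fin.succ_one_eq_two]
  grind

lemma card_commute_eq_mul_proportionalCount (κ : Type*) [Finite κ] :
    Nat.card {p : Matrix (Fin 2) (Fin 2) R × (κ → Matrix (Fin 2) (Fin 2) R) //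
        ∀ k, Commute p.1 (p.2 k)}
      = Nat.card R ^ (Nat.card κ + 1) * proportionalCount R (Fin 3) κ := by
  obtain ⟨e, he⟩ := exists_equiv_matrix_commute_iff_proportional R
  let split : {p : (R × (Fin 3 → R)) × (κ → R × (Fin 3 → R)) //
        ∀ k, Proportional p.1.2 (p.2 k).2}
      ≃ (R × (κ → R)) × {p : (Fin 3 → R) × (κ → Fin 3 → R) // ∀ k, Proportional p.1 (p.2 k)} :=
    { toFun := fun p => ((p.1.1.1, fun k => (p.1.2 k).1), ⟨(p.1.1.2, fun k => (p.1.2 k).2), p.2⟩)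
      invFun := fun q => ⟨((q.1.1, q.2.1.1), fun k => (q.1.2 k, q.2.1.2 k)), q.2.2⟩ }
  rw [← Nat.card_congr ((e.prodCongr ((Equiv.refl κ).arrowCongr e)).subtypeEquiv fun p =>
      forall_congr' fun k => (he p.1 (p.2 k)).symm), Nat.card_congr split, Nat.card_prod,
    Nat.card_prod, Nat.card_fun, ← pow_succ', proportionalCount]

end Proportional

section PrincipalNonunits

variable {R R' : Type*} [CommRing R] [CommRing R'] {π : R →+* R'} {t : R}

lemma exists_injective_range_eq_nonunits (hπ : Function.Surjective π)
    (hker : ∀ x, π x = 0 ↔ t * x = 0) (hunit : ∀ x, ¬IsUnit x ↔ t ∣ x) :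
    ∃ τ : R' → R, Function.Injective τ ∧ Set.range τ = nonunits R ∧ ∀ x, τ (π x) = t * x := by
  have hcongr (x y : R) : t * x = t * y ↔ π x = π y := by
    rw [← sub_eq_zero, ← mul_sub, ← hker, map_sub, sub_eq_zero]
  have hτ (x : R) : t * Function.surjInv hπ (π x) = t * x :=
    (hcongr _ _).2 (Function.surjInv_eq hπ _)
  refine ⟨fun y => t * Function.surjInv hπ y, fun y y' h => ?_, Set.ext fun x => ?_, hτ⟩
  · simpa only [Function.surjInv_eq] using (hcongr _ _).1 h
  · rw [mem_nonunits_iff, hunit]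
    exact ⟨fun ⟨y, hy⟩ => ⟨_, hy.symm⟩, fun ⟨y, hy⟩ => ⟨π y, (hτ y).trans hy.symm⟩⟩

lemma card_proportional_smul {ι : Type*} [Finite ι] (hπ : Function.Surjective π)
    (hker : ∀ x, π x = 0 ↔ t * x = 0) (w : ι → R) :
    Nat.card {u : ι → R // Proportional (t • w) u}
      = Nat.card (RingHom.ker π) ^ Nat.card ι *
        Nat.card {u : ι → R' // Proportional (π ∘ w) u} := by
  have hminor (u : ι → R) : Proportional (t • w) u ↔ Proportional (π ∘ w) (π ∘ u) := by
    refine forall₂_congr fun i j => ?_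
    have h := hker (w i * u j - w j * u i)
    rw [map_sub, map_mul, map_mul, mul_sub, sub_eq_zero, sub_eq_zero] at h
    simpa only [Pi.smul_apply, smul_eq_mul, mul_assoc, Function.comp_apply] using h.symm
  have hcard := card_subtype_comp_of_surjective (f := π.toAddMonoidHom.compLeft ι)
    hπ.comp_left (Proportional (π ∘ w))
  rw [card_ker_compLeft] at hcard
  rw [Nat.card_congr (Equiv.subtypeEquivRight hminor)]
  exact hcard

variable (ι κ : Type*) [Finite ι] [Finite κ]

lemma proportionalCount_add_of_surjective [Finite R] (hπ : Function.Surjective π)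
    (hker : ∀ x, π x = 0 ↔ t * x = 0) (hunit : ∀ x, ¬IsUnit x ↔ t ∣ x) :
    proportionalCount R ι κ + Nat.card R' ^ Nat.card ι * Nat.card R ^ Nat.card κ
      = Nat.card R ^ (Nat.card ι + Nat.card κ)
        + Nat.card (RingHom.ker π) ^ (Nat.card ι * Nat.card κ) * proportionalCount R' ι κ := by
  classical
  have : Finite R' := Finite.of_surjective π hπ
  cases nonempty_fintype (ι → R)
  cases nonempty_fintype (ι → R')
  obtain ⟨τ, hτinj, hτrange, hτ⟩ := exists_injective_range_eq_nonunits hπ hker hunit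
  have hdegenerate : ({w | ¬∃ i, IsUnit (w i)} : Finset (ι → R))
      = Finset.univ.map ⟨(τ ∘ ·), hτinj.comp_left⟩ := by
    ext w
    simp only [Finset.mem_filter, Finset.mem_univ, true_and, Finset.mem_map, not_exists,
      Function.Embedding.coeFn_mk, ← mem_nonunits_iff, ← hτrange, Set.mem_range, funext_iff,
      Function.comp_apply, Classical.skolem]
  have hcard (w : ι → R') : Nat.card {u : ι → R // Proportional (τ ∘ w) u}
      = Nat.card (RingHom.ker π) ^ Nat.card ι * Nat.card {u : ι → R' // Proportional w u} := by
    obtain ⟨v, rfl⟩ := hπ.comp_left w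
    rw [← card_proportional_smul hπ hker]
    exact congrArg (fun w' => Nat.card {u // Proportional w' u}) (funext fun i => hτ (v i))
  have hcount : Finset.card ({w | ∃ i, IsUnit (w i)} : Finset (ι → R)) + Nat.card R' ^ Nat.card ι
      = Nat.card R ^ Nat.card ι := by
    have h := Finset.card_filter_add_card_filter_not (s := Finset.univ)
      (fun w : ι → R => ∃ i, IsUnit (w i))
    rwa [hdegenerate, Finset.card_map, Finset.card_univ, Finset.card_univ,
      ← Nat.card_eq_fintype_card, ← Nat.card_eq_fintype_card, Nat.card_fun, Nat.card_fun] at h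
  have hunimodular : ∑ w : ι → R with ∃ i, IsUnit (w i),
      Nat.card {u : ι → R // Proportional w u} ^ Nat.card κ
      = Finset.card ({w | ∃ i, IsUnit (w i)} : Finset (ι → R)) * Nat.card R ^ Nat.card κ :=
    Finset.sum_const_nat fun w hw => by
      obtain ⟨i, hi⟩ := (Finset.mem_filter.1 hw).2
      rw [card_proportional_of_isUnit hi]
  rw [proportionalCount_eq_sum, proportionalCount_eq_sum,
    ← Finset.sum_filter_add_sum_filter_not _ (fun w : ι → R => ∃ i, IsUnit (w i)), hdegenerate,
    Finset.sum_map, hunimodular, pow_add, ← hcount]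
  simp only [Function.Embedding.coeFn_mk, hcard, mul_pow, ← Finset.mul_sum, ← pow_mul]
  ring

end PrincipalNonunits

section PrimitiveCharacters

variable {R : Type*} [CommRing R]

lemma dvd_pow_of_ne_zero {t : R} (hunit : ∀ x : R, ¬IsUnit x → t ∣ x) {k : ℕ}
    (ht : t ^ (k + 1) = 0) {x : R} (hx : x ≠ 0) : x ∣ t ^ k := by
  by_contra hndvd
  suffices h : ∀ j ≤ k + 1, t ^ j ∣ x from hx (zero_dvd_iff.1 (ht ▸ h (k + 1) le_rfl))
  intro j hj
  induction j with
  | zero => exact (pow_zero t).symm ▸ one_dvd x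
  | succ j ih =>
    obtain ⟨y, rfl⟩ := ih (by omega)
    have hy : ¬IsUnit y := fun hy => hndvd (hy.mul_right_dvd.2 (pow_dvd_pow t (by omega)))
    exact pow_succ t j ▸ mul_dvd_mul_left (t ^ j) (hunit y hy)

lemma exists_isPrimitive_of_forall_dvd [Finite R] {s : R} (hs : s ≠ 0)
    (hdvd : ∀ x : R, x ≠ 0 → x ∣ s) : ∃ ψ : AddChar R ℂ, ψ.IsPrimitive := by
  obtain ⟨ψ, hψ⟩ := AddChar.exists_apply_ne_zero.2 hs
  refine ⟨ψ, fun x hx hshift => ?_⟩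
  obtain ⟨r, rfl⟩ := hdvd x hx
  exact hψ (DFunLike.congr_fun hshift r)

end PrimitiveCharacters

section QuotientByPower

open Ideal

variable {A : Type*} [CommRing A] {p : A}

lemma finite_quotient_span_pow (p : A) [Finite (A ⧸ span {p})] (k : ℕ) :
    Finite (A ⧸ span {p ^ k}) :=
  span_singleton_pow p k ▸ finite_quotient_pow ⟨{p}, by simp⟩ k

lemma not_isUnit_quotient_span_pow_iff [(span {p}).IsMaximal] {k : ℕ}
    (x : A ⧸ span {p ^ (k + 1)}) : ¬IsUnit x ↔ Ideal.Quotient.mk _ p ∣ x := by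
  obtain ⟨a, rfl⟩ := Ideal.Quotient.mk_surjective x
  have hle : span {p ^ (k + 1)} ≤ span {p} :=
    span_singleton_le_span_singleton.2 (dvd_pow_self p k.succ_ne_zero)
  have h := Ideal.Quotient.isUnit_mk_pow_iff_notMem (span {p}) k.succ_ne_zero (x := a)
  rw [span_singleton_pow] at h
  rw [h, not_not, mem_span_singleton]
  refine ⟨map_dvd _, fun ⟨y, hy⟩ => ?_⟩
  obtain ⟨b, rfl⟩ := Ideal.Quotient.mk_surjective y
  rw [← map_mul, Ideal.Quotient.eq] at hy
  exact (dvd_sub_left (dvd_mul_right p b)).1 (mem_span_singleton.1 (hle hy))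

/-- The reduction map `A/(p^(k+1)) → A/(p^k)`. -/
noncomputable def reductionModPow (p : A) (k : ℕ) :
    A ⧸ span {p ^ (k + 1)} →+* A ⧸ span {p ^ k} :=
  Ideal.Quotient.factor (span_singleton_le_span_singleton.2 (pow_dvd_pow p k.le_succ))

lemma reductionModPow_surjective (p : A) (k : ℕ) : Function.Surjective (reductionModPow p k) :=
  Ideal.Quotient.factor_surjective _

variable (hp : p ∈ nonZeroDivisors A)
include hp

lemma reductionModPow_eq_zero_iff {k : ℕ} (x : A ⧸ span {p ^ (k + 1)}) :
    reductionModPow p k x = 0 ↔ Ideal.Quotient.mk _ p * x = 0 := by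
  obtain ⟨a, rfl⟩ := Ideal.Quotient.mk_surjective x
  rw [← map_mul, reductionModPow, Ideal.Quotient.factor_mk, Ideal.Quotient.eq_zero_iff_mem,
    Ideal.Quotient.eq_zero_iff_mem, mem_span_singleton, mem_span_singleton, pow_succ',
    dvd_cancel_left_mem_nonZeroDivisors hp]

lemma card_ker_reductionModPow (k : ℕ) :
    Nat.card (RingHom.ker (reductionModPow p k)) = Nat.card (A ⧸ span {p}) := by
  let f : A →ₗ[A] A ⧸ span {p ^ (k + 1)} :=
    (Submodule.mkQ (span {p ^ (k + 1)})).comp (LinearMap.mulLeft A (p ^ k))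
  have hf (a : A) : f a = Ideal.Quotient.mk _ (p ^ k * a) := rfl
  have hker : LinearMap.ker f = span {p} := by
    ext a
    rw [LinearMap.mem_ker, hf, Ideal.Quotient.eq_zero_iff_mem, mem_span_singleton,
      mem_span_singleton, pow_succ, dvd_cancel_left_mem_nonZeroDivisors (pow_mem hp k)]
  have hrange (x : A ⧸ span {p ^ (k + 1)}) :
      x ∈ RingHom.ker (reductionModPow p k) ↔ x ∈ LinearMap.range f := by
    obtain ⟨a, rfl⟩ := Ideal.Quotient.mk_surjective x
    rw [RingHom.mem_ker, reductionModPow, Ideal.Quotient.factor_mk,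
      Ideal.Quotient.eq_zero_iff_mem, mem_span_singleton]
    refine ⟨fun ⟨b, hb⟩ => ⟨b, hb ▸ hf b⟩, fun ⟨b, hb⟩ => ?_⟩
    rw [hf, Ideal.Quotient.eq, mem_span_singleton] at hb
    exact (dvd_sub_right (dvd_mul_right _ _)).1 ((pow_dvd_pow p k.le_succ).trans hb)
  rw [Nat.card_congr (Equiv.subtypeEquivRight hrange), ← hker,
    Nat.card_congr f.quotKerEquivRange.toEquiv]

lemma card_quotient_span_pow (k : ℕ) :
    Nat.card (A ⧸ span {p ^ k}) = Nat.card (A ⧸ span {p}) ^ k := by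
  induction k with
  | zero => simp
  | succ k ih =>
    rw [Submodule.card_eq_card_quotient_mul_card (RingHom.ker (reductionModPow p k)),
      Nat.card_congr
        (RingHom.quotientKerEquivOfSurjective (reductionModPow_surjective p k)).toEquiv,
      ih, card_ker_reductionModPow hp, pow_succ']

lemma quotient_mk_pow_ne_zero (hunit : ¬IsUnit p) (k : ℕ) :
    Ideal.Quotient.mk (span {p ^ (k + 1)}) p ^ k ≠ 0 := by
  rw [← map_pow, Ne, Ideal.Quotient.eq_zero_iff_mem, mem_span_singleton, pow_succ]
  exact fun hdvd => hunit (isUnit_of_dvd_one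
    ((dvd_cancel_left_mem_nonZeroDivisors (pow_mem hp k)).1 (by rwa [mul_one])))

lemma exists_isPrimitive_quotient_span_pow [hmax : (span {p}).IsMaximal]
    [Finite (A ⧸ span {p})] (k : ℕ) : ∃ ψ : AddChar (A ⧸ span {p ^ k}) ℂ, ψ.IsPrimitive := by
  cases k with
  | zero =>
    have : Subsingleton (A ⧸ span {p ^ 0}) := by simp
    exact ⟨0, fun x hx => absurd (Subsingleton.elim x 0) hx⟩
  | succ k =>
    have := finite_quotient_span_pow p (k + 1)
    have hunit : ¬IsUnit p := fun h => hmax.ne_top (span_singleton_eq_top.2 h)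
    have hnil : Ideal.Quotient.mk (span {p ^ (k + 1)}) p ^ (k + 1) = 0 := by
      rw [← map_pow, Ideal.Quotient.mk_singleton_self]
    exact exists_isPrimitive_of_forall_dvd (quotient_mk_pow_ne_zero hp hunit k) fun _ =>
      dvd_pow_of_ne_zero (fun y => (not_isUnit_quotient_span_pow_iff y).1) hnil

end QuotientByPower

section ProportionalCountModPow

variable {A : Type*} [CommRing A] {p : A} (hp : p ∈ nonZeroDivisors A)
  [(Ideal.span {p}).IsMaximal] [Finite (A ⧸ Ideal.span {p})]
  {q : ℕ} (hq : Nat.card (A ⧸ Ideal.span {p}) = q) (ι κ : Type*) [Finite ι] [Finite κ]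
include hp hq

lemma proportionalCount_quotient_span_pow (k : ℕ) :
    ((q : ℤ) ^ (Nat.card ι * Nat.card κ) - (q : ℤ) ^ (Nat.card ι + Nat.card κ))
        * proportionalCount (A ⧸ Ideal.span {p ^ k}) ι κ
      = ((q : ℤ) ^ (Nat.card ι * Nat.card κ) - (q : ℤ) ^ Nat.card κ)
          * (q : ℤ) ^ (k * (Nat.card ι * Nat.card κ))
        - ((q : ℤ) ^ (Nat.card ι + Nat.card κ) - (q : ℤ) ^ Nat.card κ)
          * (q : ℤ) ^ (k * (Nat.card ι + Nat.card κ)) := by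
  induction k with
  | zero =>
    have : Subsingleton (A ⧸ Ideal.span {p ^ 0}) := by simp
    rw [proportionalCount_eq_one_of_subsingleton]
    push_cast
    ring
  | succ k ih =>
    have := finite_quotient_span_pow p (k + 1)
    have hrec := proportionalCount_add_of_surjective ι κ (reductionModPow_surjective p k)
      (reductionModPow_eq_zero_iff hp) not_isUnit_quotient_span_pow_iff
    rw [card_ker_reductionModPow hp, card_quotient_span_pow hp, card_quotient_span_pow hp,
      hq] at hrec
    zify at hrec
    generalize (q : ℤ) = q at hrec ih ⊢
    generalize Nat.card ι = d at hrec ih ⊢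
    generalize Nat.card κ = g at hrec ih ⊢
    linear_combination (q ^ (d * g) - q ^ (d + g)) * hrec + q ^ (d * g) * ih

end ProportionalCountModPow

section RankTwo

lemma card_sum_commutator_eq_zero_mul_card_pow_four {R κ K : Type*} [CommRing R] [Finite R]
    [Fintype κ] [CommRing K] [IsDomain K] [CharZero K] {ψ : AddChar R K} (hψ : ψ.IsPrimitive) :
    Nat.card {xy : (κ → Matrix (Fin 2) (Fin 2) R) × (κ → Matrix (Fin 2) (Fin 2) R) //
        ∑ i, (xy.1 i * xy.2 i - xy.2 i * xy.1 i) = 0} * Nat.card R ^ 4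
      = Nat.card R ^ (5 * Nat.card κ + 1) * proportionalCount R (Fin 3) κ := by
  have hmatrix : Nat.card (Matrix (Fin 2) (Fin 2) R) = Nat.card R ^ 4 := by
    rw [Nat.card_congr Matrix.of.symm, Nat.card_fun, Nat.card_fun, Nat.card_fin, ← pow_mul]
  have h := card_sum_commutator_eq_zero_mul (n := Fin 2) (κ := κ) hψ
  rw [card_commute_eq_mul_proportionalCount, hmatrix] at h
  rw [h]
  ring

lemma rank_two_formula_of_mul_eq {g α : ℕ} (hg : 2 ≤ g) {q Z N : ℚ} (hq : 1 < q)
    (hZ : Z * (q ^ α) ^ 4 = (q ^ α) ^ (5 * g + 1) * N)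
    (hN : (q ^ (3 * g) - q ^ (3 + g)) * N = (q ^ (3 * g) - q ^ g) * q ^ (α * (3 * g))
      - (q ^ (3 + g) - q ^ g) * q ^ (α * (3 + g))) :
    Z = ((q ^ (2 * g) - 1) * q ^ (α * (8 * g - 3)) - (q ^ 3 - 1) * q ^ (6 * α * g))
        / (q ^ 3 * (q ^ (2 * g - 3) - 1)) := by
  have hq₀ : q ≠ 0 := by positivity
  have hden : q ^ 3 * (q ^ (2 * g - 3) - 1) ≠ 0 :=
    mul_ne_zero (pow_ne_zero _ hq₀) (sub_ne_zero.2 (one_lt_pow₀ hq (by omega)).ne')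
  obtain ⟨h, rfl⟩ := Nat.exists_eq_add_of_le' hg
  rw [eq_div_iff hden, show 2 * (h + 2) - 3 = 2 * h + 1 by omega,
    show 8 * (h + 2) - 3 = 8 * h + 13 by omega]
  refine mul_right_cancel₀ (mul_ne_zero (pow_ne_zero (h + 2) hq₀)
    (pow_ne_zero 4 (pow_ne_zero α hq₀))) ?_
  linear_combination (q ^ (3 * (h + 2)) - q ^ (3 + (h + 2))) * hZ
    + (q ^ α) ^ (5 * (h + 2) + 1) * hN

lemma card_quotient_span_X (F : Type*) [CommRing F] :
    Nat.card (Polynomial F ⧸ Ideal.span {(Polynomial.X : Polynomial F)}) = Nat.card F := by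
  have h := Nat.card_congr (Polynomial.quotientSpanXSubCAlgEquiv (0 : F)).toEquiv
  rwa [map_zero, sub_zero] at h

theorem gloop_rank_two_moment_fibre_count_general (g α : ℕ) (hg : 2 ≤ g) {A : Type*} [CommRing A]
    {p : A} (hp : p ∈ nonZeroDivisors A) [(Ideal.span {p}).IsMaximal]
    [Finite (A ⧸ Ideal.span {p})] {q : ℕ} (hq : Nat.card (A ⧸ Ideal.span {p}) = q) :
    (Nat.card {xy : (Fin g → Matrix (Fin 2) (Fin 2) (A ⧸ Ideal.span {p ^ α})) ×
        (Fin g → Matrix (Fin 2) (Fin 2) (A ⧸ Ideal.span {p ^ α})) //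
        ∑ i : Fin g, (xy.1 i * xy.2 i - xy.2 i * xy.1 i) = 0} : ℚ)
      = (((q : ℚ) ^ (2 * g) - 1) * (q : ℚ) ^ (α * (8 * g - 3))
          - ((q : ℚ) ^ 3 - 1) * (q : ℚ) ^ (6 * α * g))
        / ((q : ℚ) ^ 3 * ((q : ℚ) ^ (2 * g - 3) - 1)) := by
  have := finite_quotient_span_pow p α
  have : Nontrivial (A ⧸ Ideal.span {p}) :=
    Ideal.Quotient.nontrivial_iff.2 (Ideal.IsMaximal.ne_top inferInstance)
  have hq₁ : 1 < q := hq ▸ Finite.one_lt_card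
  obtain ⟨ψ, hψ⟩ := exists_isPrimitive_quotient_span_pow hp α
  have hZ := card_sum_commutator_eq_zero_mul_card_pow_four (κ := Fin g) hψ
  have hN := proportionalCount_quotient_span_pow hp hq (Fin 3) (Fin g) α
  rw [card_quotient_span_pow hp, hq, Nat.card_fin] at hZ
  rw [Nat.card_fin, Nat.card_fin] at hN
  exact rank_two_formula_of_mul_eq
    (N := proportionalCount (A ⧸ Ideal.span {p ^ α}) (Fin 3) (Fin g)) hg
    (by exact_mod_cast hq₁) (by exact_mod_cast hZ) (by exact_mod_cast hN)

end RankTwo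

/-- Let `g ≥ 2`, `α ≥ 1`, `𝔽_q` a finite field and `R := 𝔽_q[t]/(t^α)`.
Then the number of pairs `(x,y)` of `g`-tuples of `2×2` matrices over `R` with
`Σ_{i=1}^{g} (x_i y_i − y_i x_i) = 0` equals
`((q^{2g} − 1)·q^{α(8g−3)} − (q³ − 1)·q^{6αg}) / (q³·(q^{2g−3} − 1))`. -/
theorem gloop_rank_two_moment_fibre_count (g α : ℕ) (hg : 2 ≤ g) (hα : 1 ≤ α)
    (F : Type) [Field F] [Fintype F] :
    (Nat.card {xy : (Fin g → Matrix (Fin 2) (Fin 2) (TruncRing F α)) ×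
        (Fin g → Matrix (Fin 2) (Fin 2) (TruncRing F α)) //
        ∑ i : Fin g, (xy.1 i * xy.2 i - xy.2 i * xy.1 i) = 0} : ℚ)
      = (((Fintype.card F : ℚ) ^ (2 * g) - 1) * (Fintype.card F : ℚ) ^ (α * (8 * g - 3))
          - ((Fintype.card F : ℚ) ^ 3 - 1) * (Fintype.card F : ℚ) ^ (6 * α * g))
        / ((Fintype.card F : ℚ) ^ 3 * ((Fintype.card F : ℚ) ^ (2 * g - 3) - 1)) := by
  have : (Ideal.span {(Polynomial.X : Polynomial F)}).IsMaximal :=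
    PrincipalIdealRing.isMaximal_of_irreducible Polynomial.irreducible_X
  have hcard : Nat.card (Polynomial F ⧸ Ideal.span {(Polynomial.X : Polynomial F)})
      = Fintype.card F := (card_quotient_span_X F).trans Nat.card_eq_fintype_card
  have := Nat.finite_of_card_ne_zero (hcard.trans_ne Fintype.card_ne_zero)
  exact gloop_rank_two_moment_fibre_count_general g α hg
    (mem_nonZeroDivisors_of_ne_zero Polynomial.X_ne_zero) hcard
end

section
/- Let Q be a finite quiver, α ≥ 1, 𝔽_q a finite field, R := 𝔽_q[t]/(t^α), r ∈ ℕ^{Q₀}, and let x = (x_a)_{a∈Q₁} be any locally free representation of rank r over R. Then #{ y = (y_a)_{a∈Q₁} with y_a ∈ M_{r_{s(a)} × r_{t(a)}}(R) : μ(x,y) = 0 } = q^{−α⟨r,r⟩} · #{ (ξ_i)_{i∈Q₀} with ξ_i ∈ M_{r_i}(R) : ξ_{t(a)} x_a = x_a ξ_{s(a)} for all a ∈ Q₁ } (an equality of positive rational numbers): the number of points in the moment-map fibre over x is q^{−α⟨r,r⟩} times the number of endomorphisms of x. -/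
/-- A finite quiver (equivalently, a finite multigraph with a chosen orientation of each
edge): finitely many vertices and arrows, with source and target maps. -/
structure FinQuiver where
  V : Type
  E : Type
  [fintypeV : Fintype V]
  [fintypeE : Fintype E]
  [decEqV : DecidableEq V]
  s : E → V
  t : E → V

attribute [instance] FinQuiver.fintypeV FinQuiver.fintypeE FinQuiver.decEqV

namespace FinQuiver

/-- The adjacency (simple) graph of the underlying multigraph: two vertices are adjacent
if some edge joins them.  Connectivity of the multigraph only depends on this graph. -/
def adjGraph (G : FinQuiver) : SimpleGraph G.V :=
  SimpleGraph.fromRel fun a b => ∃ e : G.E, G.s e = a ∧ G.t e = b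

/-- The number of connected components of the underlying multigraph. -/
noncomputable def c (G : FinQuiver) : ℕ :=
  Nat.card G.adjGraph.ConnectedComponent

/-- The Betti number `b(Q) = c(Q) - #Q₀ + #Q₁` of the underlying multigraph. -/
noncomputable def betti (G : FinQuiver) : ℤ :=
  (G.c : ℤ) - Fintype.card G.V + Fintype.card G.E

/-- The underlying multigraph is connected. -/
def Connected (G : FinQuiver) : Prop := G.adjGraph.Connected

/-- Deletion of the edge `e`. -/
noncomputable def deleteEdge (G : FinQuiver) (e : G.E) : FinQuiver :=
  letI : DecidableEq G.E := Classical.decEq _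
  { V := G.V, E := {e' : G.E // e' ≠ e}, s := fun e' => G.s e'.1, t := fun e' => G.t e'.1 }

/-- The underlying multigraph is 2-connected: it is connected and stays connected after
deleting any single edge. -/
def TwoConnected (G : FinQuiver) : Prop :=
  G.Connected ∧ ∀ e : G.E, (G.deleteEdge e).Connected

/-- Restriction `Q|_I` to a subset `I` of the vertices (full sub(multi)graph). -/
noncomputable def restrictV (G : FinQuiver) (I : Set G.V) : FinQuiver :=
  letI : DecidablePred (· ∈ I) := Classical.decPred _
  { V := ↥I
    E := {e : G.E // G.s e ∈ I ∧ G.t e ∈ I}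
    s := fun e => ⟨G.s e.1, e.2.1⟩
    t := fun e => ⟨G.t e.1, e.2.2⟩ }

/-- Restriction `Q|_J` to a subset `J` of the edges (keeping all vertices). -/
noncomputable def restrictE (G : FinQuiver) (J : Set G.E) : FinQuiver :=
  letI : DecidablePred (· ∈ J) := Classical.decPred _
  { V := G.V
    E := ↥J
    s := fun e => G.s e.1
    t := fun e => G.t e.1 }

end FinQuiver

/-- A locally free representation of rank `r` of the quiver `G` over `R`: a matrix
`x_a` of size `r_{t(a)} × r_{s(a)}` for every arrow `a`. -/
abbrev QRep (G : FinQuiver) (R : Type) [CommRing R] (r : G.V → ℕ) : Type :=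
  ∀ a : G.E, Matrix (Fin (r (G.t a))) (Fin (r (G.s a))) R

/-- The second component of a pair in the doubled quiver: a matrix `y_a` of size
`r_{s(a)} × r_{t(a)}` for every arrow `a`. -/
abbrev QCoRep (G : FinQuiver) (R : Type) [CommRing R] (r : G.V → ℕ) : Type :=
  ∀ a : G.E, Matrix (Fin (r (G.s a))) (Fin (r (G.t a))) R

/-- The moment map of the quiver `G`:
`μ(x,y)_i := Σ_{a : t(a)=i} x_a y_a − Σ_{a : s(a)=i} y_a x_a`. -/
noncomputable def momentMap (G : FinQuiver) {R : Type} [CommRing R] {r : G.V → ℕ}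
    (x : QRep G R r) (y : QCoRep G R r) (i : G.V) : Matrix (Fin (r i)) (Fin (r i)) R :=
  (∑ a : G.E, if h : G.t a = i then
      cast (congrArg (fun v => Matrix (Fin (r v)) (Fin (r v)) R) h) (x a * y a) else 0)
  - ∑ a : G.E, if h : G.s a = i then
      cast (congrArg (fun v => Matrix (Fin (r v)) (Fin (r v)) R) h) (y a * x a) else 0

/-- The Euler form `⟨r,r'⟩ := Σ_{i∈Q₀} r_i r'_i − Σ_{a∈Q₁} r_{s(a)} r'_{t(a)}` of `G`. -/
def eulerForm (G : FinQuiver) (r r' : G.V → ℕ) : ℤ :=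
  ∑ i : G.V, (r i : ℤ) * (r' i : ℤ) - ∑ a : G.E, (r (G.s a) : ℤ) * (r' (G.t a) : ℤ)

/-- The change-of-basis action of `GL_{α,r} = ∏_i GL_{r_i}(R)` on representations:
`(g·x)_a := g_{t(a)} x_a g_{s(a)}⁻¹`. -/
def glAct (G : FinQuiver) {R : Type} [CommRing R] {r : G.V → ℕ}
    (g : ∀ i : G.V, (Matrix (Fin (r i)) (Fin (r i)) R)ˣ) (x : QRep G R r) : QRep G R r :=
  fun a => (g (G.t a) : Matrix (Fin (r (G.t a))) (Fin (r (G.t a))) R) * x a *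
    (((g (G.s a))⁻¹ : (Matrix (Fin (r (G.s a))) (Fin (r (G.s a))) R)ˣ) :
      Matrix (Fin (r (G.s a))) (Fin (r (G.s a))) R)

/-- `A` is block-diagonal for the splittings `m = m' + (m − m')`, `n = n' + (n − n')`:
all entries `A k l` with `(k < m') ↮ (l < n')` vanish. -/
def IsBlockDiag {R : Type} [CommRing R] {m n : ℕ} (m' n' : ℕ)
    (A : Matrix (Fin m) (Fin n) R) : Prop :=
  ∀ (k : Fin m) (l : Fin n), ¬ ((k : ℕ) < m' ↔ (l : ℕ) < n') → A k l = 0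

/-- `r'` is the rank vector of a direct summand of the representation `x`: for some
complementary rank vector `r''` with `r' + r'' = r`, some change of basis `g` makes all
matrices of `x` block-diagonal with diagonal blocks of sizes prescribed by `r'`, `r''`.
(In particular `r' = 0` and `r' = r` always qualify.) -/
def IsSummandRank (G : FinQuiver) {R : Type} [CommRing R] {r : G.V → ℕ}
    (x : QRep G R r) (r' : G.V → ℕ) : Prop :=
  ∃ r'' : G.V → ℕ, (∀ i, r' i + r'' i = r i) ∧
    ∃ g : ∀ i : G.V, (Matrix (Fin (r i)) (Fin (r i)) R)ˣ,
      ∀ a : G.E, IsBlockDiag (r' (G.t a)) (r' (G.s a)) (glAct G g x a)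

/-- `x` is decomposable: it is a direct sum of two representations of nonzero ranks. -/
def Decomposable (G : FinQuiver) {R : Type} [CommRing R] {r : G.V → ℕ}
    (x : QRep G R r) : Prop :=
  ∃ r' r'' : G.V → ℕ, (∀ i, r' i + r'' i = r i) ∧ r' ≠ 0 ∧ r'' ≠ 0 ∧
    ∃ g : ∀ i : G.V, (Matrix (Fin (r i)) (Fin (r i)) R)ˣ,
      ∀ a : G.E, IsBlockDiag (r' (G.t a)) (r' (G.s a)) (glAct G g x a)

/-!
By cyclicity of the trace, `μ(x, ·)` is adjoint to the infinitesimal action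
`ξ ↦ (ξ_{t(a)} x_a - x_a ξ_{s(a)})_a`, so the bilinear form
`(ξ, y) ↦ Σ_a tr ((ξ_{t(a)} x_a - x_a ξ_{s(a)}) y_a)` has the endomorphisms of `x` as left kernel
and the fibre of the moment map as right kernel. Composing it with a primitive additive character
of `R` and summing over all pairs `(ξ, y)` in the two possible orders compares the sizes of the two
kernels. This works over every finite commutative ring with a primitive additive character, that is,
over every finite commutative Frobenius ring. For `R = F[t]/(t^α)` such a character comes from a
primitive character of `F` applied to the coefficient of `t^(α-1)`.
-/

section PrimitiveCharacters

variable {R K : Type*} [CommRing R]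

theorem compAddMonoidHom_linearMap_eq_zero_iff [CommMonoid K] {ψ : AddChar R K}
    (hψ : ψ.IsPrimitive) {M : Type*} [AddCommGroup M] [Module R M] {f : M →ₗ[R] R} :
    ψ.compAddMonoidHom f.toAddMonoidHom = 0 ↔ f = 0 := by
  refine ⟨fun h => LinearMap.ext fun m => ?_, fun h => by ext; simp [h]⟩
  by_contra hm
  refine hψ hm <| DFunLike.ext _ _ fun c => ?_
  simpa [mul_comm] using DFunLike.congr_fun h (c • m)

theorem isPrimitive_compAddMonoidHom_linearMap [CommMonoid K] {χ : AddChar R K}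
    (hχ : χ.IsPrimitive) {S : Type*} [CommRing S] [Algebra R S] (φ : S →ₗ[R] R)
    (hφ : ∀ a, (∀ b, φ (a * b) = 0) → a = 0) :
    (χ.compAddMonoidHom φ.toAddMonoidHom).IsPrimitive := fun a ha hψ =>
  ha <| hφ a <| LinearMap.congr_fun <|
    (compAddMonoidHom_linearMap_eq_zero_iff hχ (f := φ ∘ₗ LinearMap.mulLeft R a)).1 hψ

variable [CommRing K] [IsDomain K] {M N : Type*} [AddCommGroup M] [Module R M]
  [AddCommGroup N] [Module R N]

theorem sum_sum_addChar_eq_natCard_mul [Fintype M] [Fintype N] {ψ : AddChar R K}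
    (hψ : ψ.IsPrimitive) (β : M →ₗ[R] N →ₗ[R] R) :
    ∑ m, ∑ n, ψ (β m n) = Nat.card N * Nat.card (LinearMap.ker β) := by
  classical
  have hsum (m : M) : ∑ n, ψ (β m n) = if β m = 0 then (Nat.card N : K) else 0 := by
    simpa [compAddMonoidHom_linearMap_eq_zero_iff hψ] using
      AddChar.sum_eq_ite (ψ.compAddMonoidHom (β m).toAddMonoidHom)
  simp [hsum, ← Finset.sum_filter, Fintype.card_subtype, mul_comm]

theorem natCard_mul_natCard_ker_eq_natCard_mul_natCard_ker_flip [CharZero K] [Finite M] [Finite N]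
    {ψ : AddChar R K} (hψ : ψ.IsPrimitive) (β : M →ₗ[R] N →ₗ[R] R) :
    Nat.card N * Nat.card (LinearMap.ker β) = Nat.card M * Nat.card (LinearMap.ker β.flip) := by
  cases nonempty_fintype M
  cases nonempty_fintype N
  have hcomm : ∑ m, ∑ n, ψ (β m n) = ∑ n, ∑ m, ψ (β.flip n m) := Finset.sum_comm
  rw [sum_sum_addChar_eq_natCard_mul hψ, sum_sum_addChar_eq_natCard_mul hψ] at hcomm
  exact_mod_cast hcomm

end PrimitiveCharacters

section TracePairing

variable {ι : Type*} [Fintype ι] (R : Type*) [CommRing R] (m n : ι → Type*)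
  [∀ i, Fintype (m i)] [∀ i, Fintype (n i)]

/-- The pairing `(A, B) ↦ Σ_i tr (A_i B_i)` between families of matrices of transposed shapes. -/
noncomputable def tracePairing :
    (∀ i, Matrix (m i) (n i) R) →ₗ[R] (∀ i, Matrix (n i) (m i) R) →ₗ[R] R :=
  LinearMap.mk₂ R (fun A B => ∑ i, (A i * B i).trace)
    (fun A A' B => by simp [Matrix.add_mul, Finset.sum_add_distrib])
    (fun c A B => by simp [Finset.mul_sum])
    (fun A B B' => by simp [Matrix.mul_add, Finset.sum_add_distrib])
    (fun c A B => by simp [Finset.mul_sum])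

variable {m n} in
theorem tracePairing_apply (A : ∀ i, Matrix (m i) (n i) R) (B : ∀ i, Matrix (n i) (m i) R) :
    tracePairing R m n A B = ∑ i, (A i * B i).trace := rfl

theorem tracePairing_flip : (tracePairing R m n).flip = tracePairing R n m := by
  refine LinearMap.ext₂ fun B A => ?_
  simp only [LinearMap.flip_apply, tracePairing_apply, Matrix.trace_mul_comm (A _)]

theorem tracePairing_separatingLeft : (tracePairing R m n).SeparatingLeft := by
  classical
  refine fun A hA => funext fun i => Matrix.ext_iff_trace_mul_right.2 fun B => ?_
  have hi := hA (Pi.single i B)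
  rw [tracePairing_apply, Fintype.sum_eq_single i fun j hj => by simp [Pi.single_eq_of_ne hj]] at hi
  simpa using hi

theorem tracePairing_separatingRight : (tracePairing R m n).SeparatingRight := by
  rw [← LinearMap.flip_separatingLeft, tracePairing_flip]
  exact tracePairing_separatingLeft R n m

end TracePairing

theorem natCard_pi_matrix {ι : Type*} [Fintype ι] (R : Type*) (m n : ι → ℕ) :
    Nat.card (∀ i, Matrix (Fin (m i)) (Fin (n i)) R) = Nat.card R ^ ∑ i, m i * n i := by
  have hcard (i : ι) : Nat.card (Matrix (Fin (m i)) (Fin (n i)) R) = Nat.card R ^ (m i * n i) := by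
    simp [Matrix, Nat.card_pi, ← pow_mul, mul_comm]
  simp only [Nat.card_pi, hcard, Finset.prod_pow_eq_pow_sum]

theorem sum_trace_mul_sum_dite_cast {V E R : Type*} [Fintype V] [DecidableEq V] [Fintype E]
    [NonUnitalNonAssocSemiring R] {r : V → ℕ} (v : E → V)
    (ξ : ∀ i, Matrix (Fin (r i)) (Fin (r i)) R)
    (A : ∀ a, Matrix (Fin (r (v a))) (Fin (r (v a))) R) :
    ∑ i, (ξ i * ∑ a, if h : v a = i then
      cast (congrArg (fun v => Matrix (Fin (r v)) (Fin (r v)) R) h) (A a) else 0).trace =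
      ∑ a, (ξ (v a) * A a).trace := by
  simp only [Matrix.mul_sum, Matrix.trace_sum]
  rw [Finset.sum_comm]
  refine Finset.sum_congr rfl fun a _ => ?_
  rw [Fintype.sum_eq_single (v a) fun i hi => by simp [hi.symm]]
  simp

section MomentMap

variable (G : FinQuiver) {R : Type} [CommRing R] {r : G.V → ℕ}

/-- The differential at the identity of `g ↦ glAct G g x`, sending `ξ` to
`(ξ_{t(a)} x_a - x_a ξ_{s(a)})_a`. -/
noncomputable def infinitesimalAction (x : QRep G R r) :
    (∀ i : G.V, Matrix (Fin (r i)) (Fin (r i)) R) →ₗ[R] QRep G R r where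
  toFun ξ a := ξ (G.t a) * x a - x a * ξ (G.s a)
  map_add' ξ ξ' := by
    ext1 a
    simp only [Pi.add_apply, Matrix.add_mul, Matrix.mul_add]
    abel
  map_smul' c ξ := by
    ext1 a
    simp [smul_sub]

variable (x : QRep G R r)

theorem mem_ker_infinitesimalAction_iff {ξ : ∀ i : G.V, Matrix (Fin (r i)) (Fin (r i)) R} :
    ξ ∈ LinearMap.ker (infinitesimalAction G x) ↔
      ∀ a : G.E, ξ (G.t a) * x a = x a * ξ (G.s a) := by
  simp [infinitesimalAction, funext_iff, sub_eq_zero]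

theorem tracePairing_momentMap (ξ : ∀ i : G.V, Matrix (Fin (r i)) (Fin (r i)) R)
    (y : QCoRep G R r) :
    tracePairing R _ _ ξ (momentMap G x y) = tracePairing R _ _ (infinitesimalAction G x ξ) y := by
  simp only [tracePairing_apply, momentMap, infinitesimalAction, LinearMap.coe_mk, AddHom.coe_mk,
    Matrix.mul_sub, Matrix.sub_mul, Matrix.trace_sub, Finset.sum_sub_distrib,
    sum_trace_mul_sum_dite_cast, Matrix.mul_assoc, Matrix.trace_mul_cycle' (ξ _) (y _)]

/-- The form `(ξ, y) ↦ Σ_i tr (ξ_i μ(x, y)_i)`, written through the infinitesimal action so that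
it is visibly bilinear. -/
noncomputable def momentPairing :
    (∀ i : G.V, Matrix (Fin (r i)) (Fin (r i)) R) →ₗ[R] QCoRep G R r →ₗ[R] R :=
  tracePairing R _ _ ∘ₗ infinitesimalAction G x

theorem ker_momentPairing :
    LinearMap.ker (momentPairing G x) = LinearMap.ker (infinitesimalAction G x) :=
  LinearMap.ker_comp_of_ker_eq_bot _ <|
    LinearMap.separatingLeft_iff_ker_eq_bot.1 (tracePairing_separatingLeft R _ _)

theorem mem_ker_flip_momentPairing_iff {y : QCoRep G R r} :
    y ∈ LinearMap.ker (momentPairing G x).flip ↔ ∀ i, momentMap G x y i = 0 := by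
  have hadj (ξ) : (momentPairing G x).flip y ξ = tracePairing R _ _ ξ (momentMap G x y) :=
    (tracePairing_momentMap G x ξ y).symm
  rw [LinearMap.mem_ker, LinearMap.ext_iff, ← funext_iff (g := fun _ => 0)]
  simp only [hadj, LinearMap.zero_apply]
  exact ⟨fun h => tracePairing_separatingRight R _ _ _ h, fun h ξ => h ▸ map_zero _⟩

theorem natCard_pow_mul_natCard_end_eq [Finite R] {K : Type*} [CommRing K] [IsDomain K]
    [CharZero K] {ψ : AddChar R K} (hψ : ψ.IsPrimitive) :
    Nat.card R ^ (∑ a, r (G.s a) * r (G.t a)) *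
        Nat.card {ξ : ∀ i : G.V, Matrix (Fin (r i)) (Fin (r i)) R //
          ∀ a : G.E, ξ (G.t a) * x a = x a * ξ (G.s a)} =
      Nat.card R ^ (∑ i, r i * r i) *
        Nat.card {y : QCoRep G R r // ∀ i, momentMap G x y i = 0} := by
  have h := natCard_mul_natCard_ker_eq_natCard_mul_natCard_ker_flip hψ (momentPairing G x)
  rw [natCard_pi_matrix, natCard_pi_matrix, ker_momentPairing] at h
  simpa only [← mem_ker_infinitesimalAction_iff, ← mem_ker_flip_momentPairing_iff] using h

theorem momentFibre_card_eq_end_card_general [Finite R] {K : Type*} [CommRing K] [IsDomain K]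
    [CharZero K] {ψ : AddChar R K} (hψ : ψ.IsPrimitive) :
    (Nat.card {y : QCoRep G R r // ∀ i : G.V, momentMap G x y i = 0} : ℚ) =
      (Nat.card R : ℚ) ^ (-eulerForm G r r) *
        Nat.card {ξ : ∀ i : G.V, Matrix (Fin (r i)) (Fin (r i)) R //
          ∀ a : G.E, ξ (G.t a) * x a = x a * ξ (G.s a)} := by
  have hR : (Nat.card R : ℚ) ≠ 0 := Nat.cast_ne_zero.2 Nat.card_pos.ne'
  have heuler : -eulerForm G r r =
      ((∑ a, r (G.s a) * r (G.t a) : ℕ) : ℤ) - (∑ i, r i * r i : ℕ) := by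
    simp [eulerForm]
  rw [heuler, zpow_sub₀ hR, zpow_natCast, zpow_natCast, div_mul_eq_mul_div,
    eq_div_iff (pow_ne_zero _ hR), mul_comm]
  exact_mod_cast (natCard_pow_mul_natCard_end_eq G x hψ).symm

end MomentMap

section TruncatedPolynomials

open Polynomial

variable (F : Type) [CommRing F] (α : ℕ)

instance module_finite_truncRing : Module.Finite F (TruncRing F α) :=
  (monic_X_pow α).finite_quotient

instance finite_truncRing [Finite F] : Finite (TruncRing F α) :=
  Module.finite_of_finite F

theorem natCard_truncRing (F : Type) [Field F] : Nat.card (TruncRing F α) = Nat.card F ^ α := by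
  rw [Module.natCard_eq_pow_finrank (K := F), finrank_quotient_span_eq_natDegree, natDegree_X_pow]

variable {α}

/-- The functional on `F[t]/(t^α)` reading off the coefficient of `t^(α-1)`. It makes `F[t]/(t^α)`
a Frobenius algebra over `F`. -/
noncomputable def topCoeff (hα : 1 ≤ α) : TruncRing F α →ₗ[F] F :=
  Submodule.liftQ ((Ideal.span {(X : F[X]) ^ α}).restrictScalars F) (lcoeff F (α - 1))
    (fun p hp => X_pow_dvd_iff.1 (Ideal.mem_span_singleton.1 hp) _ (by lia)) ∘ₗ
    (Submodule.Quotient.restrictScalarsEquiv F (Ideal.span {(X : F[X]) ^ α})).symm.toLinearMap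

theorem topCoeff_mk (hα : 1 ≤ α) (p : F[X]) :
    topCoeff F hα (Ideal.Quotient.mk _ p) = p.coeff (α - 1) := rfl

theorem eq_zero_of_topCoeff_mul_eq_zero (hα : 1 ≤ α) (a : TruncRing F α)
    (h : ∀ b, topCoeff F hα (a * b) = 0) : a = 0 := by
  obtain ⟨p, rfl⟩ := Ideal.Quotient.mk_surjective a
  rw [Ideal.Quotient.eq_zero_iff_mem, Ideal.mem_span_singleton, X_pow_dvd_iff]
  intro k hk
  have hcoeff := h (Ideal.Quotient.mk _ (X ^ (α - 1 - k)))
  rwa [← map_mul, topCoeff_mk, coeff_mul_X_pow', if_pos (by lia), Nat.sub_sub_self (by lia)]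
    at hcoeff

theorem exists_isPrimitive_addChar_truncRing (F : Type) [Field F] [Finite F] (hα : 1 ≤ α) :
    ∃ (n : ℕ+) (ψ : AddChar (TruncRing F α) (CyclotomicField n ℚ)), ψ.IsPrimitive :=
  have hchar : ringChar ℚ ≠ ringChar F := by
    rw [ringChar.eq_zero]
    exact (CharP.ringChar_ne_zero_of_finite F).symm
  ⟨_, _, isPrimitive_compAddMonoidHom_linearMap (AddChar.FiniteField.primitiveChar F ℚ hchar).prim
    (topCoeff F hα) (eq_zero_of_topCoeff_mul_eq_zero F hα)⟩

end TruncatedPolynomials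

/-- Let `Q` be a finite quiver, `α ≥ 1`, `𝔽_q` a finite field,
`R := 𝔽_q[t]/(t^α)`, `r ∈ ℕ^{Q₀}`, and let `x` be any locally free representation of
rank `r` over `R`.  Then the number of `y` with `μ(x,y) = 0` equals `q^{−α⟨r,r⟩}` times
the number of endomorphisms of `x` (an equality of positive rational numbers). -/
theorem momentFibre_card_eq_end_card (G : FinQuiver) (α : ℕ) (hα : 1 ≤ α)
    (F : Type) [Field F] [Fintype F] (r : G.V → ℕ)
    (x : QRep G (TruncRing F α) r) :
    (Nat.card {y : QCoRep G (TruncRing F α) r // ∀ i : G.V, momentMap G x y i = 0} : ℚ)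
      = (Fintype.card F : ℚ) ^ (-(α : ℤ) * eulerForm G r r) *
        (Nat.card {ξ : ∀ i : G.V, Matrix (Fin (r i)) (Fin (r i)) (TruncRing F α) //
            ∀ a : G.E, ξ (G.t a) * x a = x a * ξ (G.s a)} : ℚ) := by
  obtain ⟨_, _, hψ⟩ := exists_isPrimitive_addChar_truncRing F hα
  rw [momentFibre_card_eq_end_card_general G x hψ, natCard_truncRing, Nat.card_eq_fintype_card,
    Nat.cast_pow, ← zpow_natCast, ← zpow_mul, mul_neg, neg_mul]
end
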